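/- Let u be a global solution of ∂_t²u - Δu = -|u|^{p-1}u on ℝ^d with conserved energy E, satisfying: (i) finite speed of energy propagation (the energy in any shrinking backward cone region is monotone as in Proposition 'energy flux'), (ii) the Morawetz consequence ∫_{|t'|>R}∫_{|x|<R} e(u) dx dt' ≤ ∫_{-R}^{R}∫_{|x|>R} e(u) dx dt' for all R > 0, and (iii) E_κ(u₀,u₁) = ∫_{ℝ^d}(1+|x|^κ) e(u₀,u₁)(x) dx < ∞ for some κ ∈ (0,1), where e(u) = |∇u|²/2 + |u_t|²/2 + |u|^{p+1}/(p+1). Then for every c > 0, lim_{t→+∞} ∫_{|x| < t - c t^{1-κ}} e(u)(x,t) dx = 0. -/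

import Mathlib

open MeasureTheory Real Filter

/-!
Let `t` be large and put `h = c t^(1-κ)`. By finite speed of propagation the energy in
`{|x| < t - h}` at time `t` stays inside `{|x| < t}` during `(t, t + h]`, so `h` times that energy
is at most the space-time energy in `{|x| < t < |t'|}`. The Morawetz consequence moves this to
`{|t'| < t < |x|}`, where finite speed of propagation bounds it by the tails `{|x| > s}`,
`0 < s < t`, of the energy of the data. These are `o(s^(-κ))` by the weighted bound, so their
integral over `s` is `o(t^(1-κ)) = o(h)`.

The Bochner integral on the left of the Morawetz consequence is `0` by convention unless the energy
in a ball is integrable in time, so that integrability has to be established. It comes from the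
Morawetz multiplier `X · ∇u + g u` with `X = ⟨x⟩⁻¹ x`, `⟨x⟩ = (1 + |x|²)^(1/2)`: the production
dominates `⟨x⟩⁻³ e(u)`, while density and flux are controlled by `e(u) + ⟨x⟩⁻² u²`, hence by the
energy through Hardy's inequality.
-/

namespace WaveDecay

open scoped RealInnerProductSpace Gradient Topology

variable {E : Type*} [NormedAddCommGroup E]

section Divergence

variable [InnerProductSpace ℝ E]

/-- The divergence of a vector field, as the trace of its derivative. -/
noncomputable def divergence (X : E → E) (x : E) : ℝ :=
  LinearMap.trace ℝ E (fderiv ℝ X x)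

theorem divergence_add {X Y : E → E} {x : E} (hX : DifferentiableAt ℝ X x)
    (hY : DifferentiableAt ℝ Y x) :
    divergence (fun y => X y + Y y) x = divergence X x + divergence Y x := by
  simp only [divergence, fderiv_fun_add hX hY, ContinuousLinearMap.toLinearMap_add, map_add]

theorem divergence_sub {X Y : E → E} {x : E} (hX : DifferentiableAt ℝ X x)
    (hY : DifferentiableAt ℝ Y x) :
    divergence (fun y => X y - Y y) x = divergence X x - divergence Y x := by
  simp only [divergence, fderiv_fun_sub hX hY, ContinuousLinearMap.toLinearMap_sub, map_sub]

theorem divergence_const_smul {X : E → E} {x : E}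
    (hX : DifferentiableAt ℝ X x) (c : ℝ) :
    divergence (fun y => c • X y) x = c * divergence X x := by
  rw [divergence, fderiv_fun_const_smul hX, ContinuousLinearMap.toLinearMap_smul, map_smul,
    smul_eq_mul, divergence]

variable [FiniteDimensional ℝ E]

theorem divergence_smul {f : E → ℝ} {X : E → E} {x : E} (hf : DifferentiableAt ℝ f x)
    (hX : DifferentiableAt ℝ X x) :
    divergence (fun y => f y • X y) x = f x * divergence X x + fderiv ℝ f x (X x) := by
  simp only [divergence, fderiv_fun_smul hf hX, ContinuousLinearMap.toLinearMap_add,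
    ContinuousLinearMap.toLinearMap_smul, map_add, map_smul, smul_eq_mul, add_right_inj]
  exact LinearMap.trace_smulRight _ _

theorem divergence_id (x : E) : divergence (fun y : E => y) x = Module.finrank ℝ E := by
  simp only [divergence, fderiv_fun_id, ContinuousLinearMap.coe_id, LinearMap.trace_id]

variable [MeasurableSpace E] [BorelSpace E]

theorem integral_fderiv_apply_eq_zero {f : E → ℝ} (hf : Differentiable ℝ f)
    (hint : Integrable f) {v : E} (hint' : Integrable fun x => fderiv ℝ f x v) :
    ∫ x, fderiv ℝ f x v = 0 := by
  simpa using integral_mul_fderiv_eq_neg_fderiv_mul_of_integrable (μ := volume) (f := fun _ => 1)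
    (g := f) (v := v) (by simp) (by simpa using hint') (by simpa using hint)
    (fun _ _ => differentiableAt_const _) (fun x _ => hf x)

theorem integrable_divergence {X : E → E} (hX : Integrable (fderiv ℝ X)) :
    Integrable (divergence X) := by
  unfold divergence
  simp only [LinearMap.trace_eq_sum_inner _ (stdOrthonormalBasis ℝ E)]
  exact integrable_finsetSum _ fun i _ => (hX.apply_continuousLinearMap _).const_inner _

theorem integral_divergence_eq_zero {X : E → E} (hX : Differentiable ℝ X)
    (hint : Integrable X) (hint' : Integrable (fderiv ℝ X)) : ∫ x, divergence X x = 0 := by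
  let b := stdOrthonormalBasis ℝ E
  have hderiv (i) (x : E) :
      fderiv ℝ (fun y => ⟪b i, X y⟫) x (b i) = ⟪b i, fderiv ℝ X x (b i)⟫ := by
    simp [fderiv_inner_apply ℝ (differentiableAt_const _) (hX x)]
  have hderiv_int (i) : Integrable fun x => ⟪b i, fderiv ℝ X x (b i)⟫ :=
    (hint'.apply_continuousLinearMap _).const_inner _
  simp only [divergence, LinearMap.trace_eq_sum_inner _ b, ContinuousLinearMap.coe_coe]
  rw [integral_finsetSum _ fun i _ => hderiv_int i]
  refine Finset.sum_eq_zero fun i _ => ?_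
  simp only [← hderiv]
  exact integral_fderiv_apply_eq_zero ((differentiable_const _).inner ℝ hX) (hint.const_inner _)
    (by simpa only [hderiv] using hderiv_int i)

end Divergence

section InvBracket

/-- The inverse Japanese bracket `⟨x⟩⁻¹ = (1 + ‖x‖²)^(-1/2)`, a smooth substitute for `‖x‖⁻¹`. -/
noncomputable def invBracket (x : E) : ℝ :=
  (√(1 + ‖x‖ ^ 2))⁻¹

theorem invBracket_pos (x : E) : 0 < invBracket x := by
  unfold invBracket; positivity

theorem invBracket_sq_mul_norm_sq (x : E) : invBracket x ^ 2 * ‖x‖ ^ 2 = 1 - invBracket x ^ 2 := by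
  rw [invBracket, inv_pow, sq_sqrt (by positivity)]
  field_simp
  ring

theorem invBracket_le_one (x : E) : invBracket x ≤ 1 := by
  nlinarith [invBracket_sq_mul_norm_sq x, sq_nonneg (invBracket x * ‖x‖), invBracket_pos x]

theorem invBracket_mul_norm_le_one (x : E) : invBracket x * ‖x‖ ≤ 1 := by
  nlinarith [invBracket_sq_mul_norm_sq x, sq_nonneg (invBracket x), invBracket_pos x]

theorem inv_sqrt_le_invBracket {x : E} {R : ℝ} (hx : ‖x‖ ≤ R) :
    (√(1 + R ^ 2))⁻¹ ≤ invBracket x := by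
  unfold invBracket
  gcongr

variable [InnerProductSpace ℝ E]

theorem norm_invBracket_pow_succ_smul_le (n : ℕ) (x : E) :
    ‖invBracket x ^ (n + 1) • x‖ ≤ invBracket x ^ n := by
  have hq := invBracket_pos x
  rw [norm_smul, norm_of_nonneg (by positivity), pow_succ, mul_assoc]
  exact mul_le_of_le_one_right (by positivity) (invBracket_mul_norm_le_one x)

theorem norm_invBracket_sq_smul_le_one (x : E) : ‖invBracket x ^ 2 • x‖ ≤ 1 :=
  (norm_invBracket_pow_succ_smul_le 1 x).trans ((pow_one _).trans_le (invBracket_le_one x))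

theorem contDiff_invBracket {n : WithTop ℕ∞} : ContDiff ℝ n (invBracket : E → ℝ) :=
  ((contDiff_const.add (contDiff_norm_sq ℝ)).sqrt fun x => by positivity).inv
    fun x => by positivity

theorem hasFDerivAt_invBracket (x : E) :
    HasFDerivAt invBracket (-invBracket x ^ 3 • innerSL ℝ x) x := by
  have hpos : 0 < √(1 + ‖x‖ ^ 2) := by positivity
  have hsq := ((hasStrictFDerivAt_norm_sq x).hasFDerivAt.const_add (1 : ℝ)).sqrt (by positivity)
  refine ((hasDerivAt_inv hpos.ne').comp_hasFDerivAt x hsq).congr_fderiv ?_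
  ext y
  simp only [invBracket, smul_apply, smul_eq_mul, nsmul_eq_mul, inv_pow, innerSL_apply_apply]
  field_simp
  norm_num

theorem hasFDerivAt_invBracket_pow (n : ℕ) (x : E) :
    HasFDerivAt (fun y : E => invBracket y ^ n)
      (-(n * invBracket x ^ (n + 2)) • innerSL ℝ x) x := by
  refine ((hasFDerivAt_invBracket x).pow n).congr_fderiv ?_
  rcases n with _ | n
  · simp
  · rw [smul_smul, Nat.add_sub_cancel, nsmul_eq_mul]
    congr 1
    ring

theorem hasFDerivAt_invBracket_pow_smul (n : ℕ) (x : E) :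
    HasFDerivAt (fun y : E => invBracket y ^ n • y)
      (invBracket x ^ n • ContinuousLinearMap.id ℝ E
        - (n * invBracket x ^ (n + 2)) • (innerSL ℝ x).smulRight x) x := by
  refine ((hasFDerivAt_invBracket_pow n x).smul (hasFDerivAt_id x)).congr_fderiv ?_
  ext y
  simp [sub_eq_add_neg, mul_smul]

theorem norm_fderiv_invBracket_pow_smul_le (n : ℕ) (x : E) :
    ‖fderiv ℝ (fun y : E => invBracket y ^ n • y) x‖ ≤ (n + 1) * invBracket x ^ n := by
  have hq := invBracket_pos x
  rw [(hasFDerivAt_invBracket_pow_smul n x).fderiv]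
  calc _ ≤ invBracket x ^ n * 1 + n * invBracket x ^ (n + 2) * (‖x‖ * ‖x‖) := by
        refine (norm_sub_le _ _).trans ?_
        rw [norm_smul, norm_smul, ContinuousLinearMap.norm_smulRight_apply, innerSL_apply_norm,
          norm_of_nonneg (by positivity), norm_of_nonneg (by positivity)]
        gcongr
        exact ContinuousLinearMap.norm_id_le
    _ = invBracket x ^ n * (1 + n * (1 - invBracket x ^ 2)) := by
        rw [← invBracket_sq_mul_norm_sq]
        ring
    _ ≤ (n + 1) * invBracket x ^ n := by
        rw [mul_comm]
        refine mul_le_mul_of_nonneg_right ?_ (by positivity)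
        nlinarith [mul_nonneg n.cast_nonneg (sq_nonneg (invBracket x))]

theorem divergence_invBracket_pow_smul [FiniteDimensional ℝ E] (n : ℕ) (x : E) :
    divergence (fun y : E => invBracket y ^ n • y) x
      = (Module.finrank ℝ E - n) * invBracket x ^ n + n * invBracket x ^ (n + 2) := by
  have hq := hasFDerivAt_invBracket_pow n x
  rw [divergence_smul hq.differentiableAt differentiableAt_fun_id, divergence_id, hq.fderiv,
    smul_apply, innerSL_apply_apply, real_inner_self_eq_norm_sq, smul_eq_mul]
  linear_combination -n * invBracket x ^ n * invBracket_sq_mul_norm_sq x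

end InvBracket

section SoftThreshold

/-- Soft thresholding at level `ε`: moves `s` towards `0` by `ε`, stopping at `0`. -/
def softThreshold (ε s : ℝ) : ℝ :=
  max (s - ε) 0 - max (-s - ε) 0

theorem continuous_softThreshold (ε : ℝ) : Continuous (softThreshold ε) := by
  unfold softThreshold
  fun_prop

theorem abs_softThreshold {ε : ℝ} (hε : 0 ≤ ε) (s : ℝ) :
    |softThreshold ε s| = max (|s| - ε) 0 := by
  unfold softThreshold
  rcases le_total 0 s with hs | hs
  · rw [max_eq_right (by linarith : -s - ε ≤ 0), sub_zero, abs_of_nonneg (le_max_right _ _),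
      abs_of_nonneg hs]
  · rw [max_eq_right (by linarith : s - ε ≤ 0), zero_sub, abs_neg,
      abs_of_nonneg (le_max_right _ _), abs_of_nonpos hs]

theorem softThreshold_sq {ε : ℝ} (hε : 0 ≤ ε) (s : ℝ) :
    softThreshold ε s ^ 2 = max (|s| - ε) 0 ^ 2 := by
  rw [← sq_abs, abs_softThreshold hε]

theorem hasDerivAt_max_zero_sq (s : ℝ) :
    HasDerivAt (fun r : ℝ => max r 0 ^ 2) (2 * max s 0) s := by
  refine hasDerivAt_of_hasDerivAt_of_ne' (g := fun r => 2 * max r 0) (x := 0) (fun y hy => ?_)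
    (by fun_prop) (by fun_prop) s
  rcases hy.lt_or_gt with hneg | hpos
  · rw [max_eq_right hneg.le, mul_zero]
    refine (hasDerivAt_const y (0 : ℝ)).congr_of_eventuallyEq ?_
    filter_upwards [Iic_mem_nhds hneg] with r hr
    rw [max_eq_right hr, zero_pow two_ne_zero]
  · rw [max_eq_left hpos.le]
    refine HasDerivAt.congr_of_eventuallyEq (by simpa using hasDerivAt_pow 2 y) ?_
    filter_upwards [Ici_mem_nhds hpos] with r hr
    rw [max_eq_left hr]

theorem hasDerivAt_softThreshold_sq {ε : ℝ} (hε : 0 ≤ ε) (s : ℝ) :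
    HasDerivAt (fun r => softThreshold ε r ^ 2) (2 * softThreshold ε s) s := by
  have hsplit (r : ℝ) : softThreshold ε r ^ 2 = max (r - ε) 0 ^ 2 + max (-r - ε) 0 ^ 2 := by
    unfold softThreshold
    rcases le_total 0 r with hr | hr
    · rw [max_eq_right (by linarith : -r - ε ≤ 0)]; ring
    · rw [max_eq_right (by linarith : r - ε ≤ 0)]; ring
  have hright : HasDerivAt (fun r : ℝ => max (r - ε) 0 ^ 2) (2 * max (s - ε) 0 * 1) s :=
    (hasDerivAt_max_zero_sq (s - ε)).comp (h := fun r => r - ε) s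
      ((hasDerivAt_id' s).sub_const ε)
  have hleft : HasDerivAt (fun r : ℝ => max (-r - ε) 0 ^ 2) (2 * max (-s - ε) 0 * -1) s :=
    (hasDerivAt_max_zero_sq (-s - ε)).comp (h := fun r => -r - ε) s
      ((hasDerivAt_id' s).fun_neg.sub_const ε)
  simp_rw [hsplit]
  exact (hright.add hleft).congr_deriv (by unfold softThreshold; ring)

theorem softThreshold_sq_le_rpow {ε r : ℝ} (hε : 0 < ε) (hr : 2 ≤ r) (s : ℝ) :
    softThreshold ε s ^ 2 ≤ ε ^ (2 - r) * |s| ^ r := by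
  rw [softThreshold_sq hε.le]
  rcases le_total |s| ε with hs | hs
  · rw [max_eq_right (sub_nonpos.2 hs), zero_pow two_ne_zero]
    positivity
  · have hs0 : 0 < |s| := hε.trans_le hs
    calc max (|s| - ε) 0 ^ 2 ≤ |s| ^ (2 : ℝ) := by
          rw [rpow_two, max_eq_left (sub_nonneg.2 hs)]
          gcongr
          linarith
      _ = |s| ^ (2 - r) * |s| ^ r := by rw [← rpow_add hs0, sub_add_cancel]
      _ ≤ ε ^ (2 - r) * |s| ^ r := by
          gcongr ?_ * _
          exact rpow_le_rpow_of_nonpos hε hs (by linarith)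

theorem tendsto_softThreshold_sq (s : ℝ) :
    Tendsto (fun n : ℕ => softThreshold (1 / (n + 1)) s ^ 2) atTop (𝓝 (s ^ 2)) := by
  have hlim : Tendsto (fun n : ℕ => softThreshold (1 / ((n : ℝ) + 1)) s) atTop
      (𝓝 (softThreshold 0 s)) :=
    (((continuous_const.sub continuous_id).max continuous_const).sub
      ((continuous_const.sub continuous_id).max continuous_const)).continuousAt.tendsto.comp
      tendsto_one_div_add_atTop_nhds_zero_nat
  simpa [softThreshold_sq] using hlim.pow 2

end SoftThreshold

theorem integrable_and_integral_le_of_tendsto {α : Type*} [MeasurableSpace α] {μ : Measure α}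
    {f : ℕ → α → ℝ} {g : α → ℝ} {K : ℝ} (hf : ∀ n, Integrable (f n) μ) (hf0 : ∀ n, 0 ≤ᵐ[μ] f n)
    (hK : ∀ n, ∫ x, f n x ∂μ ≤ K) (hlim : ∀ᵐ x ∂μ, Tendsto (fun n => f n x) atTop (𝓝 (g x))) :
    Integrable g μ ∧ ∫ x, g x ∂μ ≤ K := by
  have hg : AEStronglyMeasurable g μ :=
    aestronglyMeasurable_of_tendsto_ae _ (fun n => (hf n).aestronglyMeasurable) hlim
  have hg0 : 0 ≤ᵐ[μ] g := by
    filter_upwards [hlim, ae_all_iff.2 hf0] with x hx hx0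
    exact ge_of_tendsto' hx hx0
  have hK0 : 0 ≤ K := (integral_nonneg_of_ae (hf0 0)).trans (hK 0)
  have hfatou : ∫⁻ x, ENNReal.ofReal (g x) ∂μ ≤ ENNReal.ofReal K :=
    calc ∫⁻ x, ENNReal.ofReal (g x) ∂μ
        = ∫⁻ x, liminf (fun n => ENNReal.ofReal (f n x)) atTop ∂μ :=
          lintegral_congr_ae <| by
            filter_upwards [hlim] with x hx using (ENNReal.tendsto_ofReal hx).liminf_eq.symm
      _ ≤ liminf (fun n => ∫⁻ x, ENNReal.ofReal (f n x) ∂μ) atTop :=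
          lintegral_liminf_le' fun n => (hf n).aestronglyMeasurable.aemeasurable.ennreal_ofReal
      _ ≤ ENNReal.ofReal K := by
          refine (liminf_le_liminf (v := fun _ => ENNReal.ofReal K)
            (Eventually.of_forall fun n => ?_)).trans_eq (liminf_const _)
          rw [← ofReal_integral_eq_lintegral_ofReal (hf n) (hf0 n)]
          exact ENNReal.ofReal_le_ofReal (hK n)
  refine ⟨(lintegral_ofReal_ne_top_iff_integrable hg hg0).1 (ne_top_of_le_ne_top (by simp) hfatou),
    ?_⟩
  rw [integral_eq_lintegral_of_nonneg_ae hg0 hg]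
  exact ENNReal.toReal_le_of_le_ofReal hK0 hfatou

section Hardy

variable [InnerProductSpace ℝ E]

/-- The vector field `T(φ)² ⟨x⟩⁻² x`, with `T` the soft threshold at level `ε`, whose divergence
yields the Hardy inequality. -/
noncomputable def hardyField (ε : ℝ) (φ : E → ℝ) (x : E) : E :=
  softThreshold ε (φ x) ^ 2 • invBracket x ^ 2 • x

theorem hasFDerivAt_softThreshold_sq_comp {ε : ℝ} (hε : 0 ≤ ε) {φ : E → ℝ} {x : E}
    (hφ : DifferentiableAt ℝ φ x) :
    HasFDerivAt (fun y => softThreshold ε (φ y) ^ 2)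
      ((2 * softThreshold ε (φ x)) • fderiv ℝ φ x) x :=
  (hasDerivAt_softThreshold_sq hε (φ x)).comp_hasFDerivAt x hφ.hasFDerivAt

theorem hasFDerivAt_hardyField {ε : ℝ} (hε : 0 ≤ ε) {φ : E → ℝ} {x : E}
    (hφ : DifferentiableAt ℝ φ x) :
    HasFDerivAt (hardyField ε φ)
      (softThreshold ε (φ x) ^ 2 • fderiv ℝ (fun y : E => invBracket y ^ 2 • y) x
        + ((2 * softThreshold ε (φ x)) • fderiv ℝ φ x).smulRight (invBracket x ^ 2 • x)) x :=
  (hasFDerivAt_softThreshold_sq_comp hε hφ).smul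
    (hasFDerivAt_invBracket_pow_smul 2 x).differentiableAt.hasFDerivAt

theorem norm_fderiv_hardyField_le {ε : ℝ} (hε : 0 ≤ ε) {φ : E → ℝ} {x : E}
    (hφ : DifferentiableAt ℝ φ x) :
    ‖fderiv ℝ (hardyField ε φ) x‖ ≤ 4 * softThreshold ε (φ x) ^ 2 + ‖fderiv ℝ φ x‖ ^ 2 := by
  have hfield : ‖fderiv ℝ (fun y : E => invBracket y ^ 2 • y) x‖ ≤ 3 := by
    have hsq := pow_le_one₀ (n := 2) (invBracket_pos x).le (invBracket_le_one x)
    have := norm_fderiv_invBracket_pow_smul_le 2 x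
    push_cast at this
    linarith
  rw [(hasFDerivAt_hardyField hε hφ).fderiv]
  calc _ ≤ softThreshold ε (φ x) ^ 2 * 3
          + 2 * |softThreshold ε (φ x)| * ‖fderiv ℝ φ x‖ * 1 := by
        refine (norm_add_le _ _).trans ?_
        rw [norm_smul, ContinuousLinearMap.norm_smulRight_apply, norm_smul,
          norm_of_nonneg (sq_nonneg _), norm_mul, Real.norm_two, Real.norm_eq_abs]
        gcongr
        exact norm_invBracket_sq_smul_le_one x
    _ ≤ 4 * softThreshold ε (φ x) ^ 2 + ‖fderiv ℝ φ x‖ ^ 2 := by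
        nlinarith [sq_nonneg (|softThreshold ε (φ x)| - ‖fderiv ℝ φ x‖),
          sq_abs (softThreshold ε (φ x))]

variable [FiniteDimensional ℝ E]

theorem le_divergence_hardyField (hd : 3 ≤ Module.finrank ℝ E) {ε : ℝ} (hε : 0 ≤ ε) {φ : E → ℝ}
    {x : E} (hφ : DifferentiableAt ℝ φ x) :
    invBracket x ^ 2 * softThreshold ε (φ x) ^ 2 / 2 - 2 * ‖fderiv ℝ φ x‖ ^ 2
      ≤ divergence (hardyField ε φ) x := by
  have hT := hasFDerivAt_softThreshold_sq_comp hε hφ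
  have hq := invBracket_pos x
  have hd' : (3 : ℝ) ≤ Module.finrank ℝ E := mod_cast hd
  set T := softThreshold ε (φ x)
  set w := ‖fderiv ℝ φ x‖
  set q := invBracket x
  have hcross : -(q * |T| * w) ≤ q ^ 2 * (T * fderiv ℝ φ x x) := by
    have hφx : |fderiv ℝ φ x x| ≤ w * ‖x‖ := (fderiv ℝ φ x).le_opNorm x
    refine (abs_le.1 ?_).1
    calc |q ^ 2 * (T * fderiv ℝ φ x x)| = q ^ 2 * (|T| * |fderiv ℝ φ x x|) := by
          rw [abs_mul, abs_mul, abs_of_nonneg (sq_nonneg q)]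
      _ ≤ q ^ 2 * (|T| * (w * ‖x‖)) := by gcongr
      _ = q * |T| * w * (q * ‖x‖) := by ring
      _ ≤ q * |T| * w :=
          mul_le_of_le_one_right (by positivity) (invBracket_mul_norm_le_one x)
  calc q ^ 2 * T ^ 2 / 2 - 2 * w ^ 2 ≤ T ^ 2 * q ^ 2 - 2 * (q * |T| * w) := by
        nlinarith [sq_nonneg (q * |T| - 2 * w), sq_abs T]
    _ ≤ T ^ 2 * ((Module.finrank ℝ E - 2) * q ^ 2 + 2 * q ^ 4)
          + 2 * (q ^ 2 * (T * fderiv ℝ φ x x)) := by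
        nlinarith [mul_nonneg (sq_nonneg (T * q)) (sub_nonneg.2 hd'),
          mul_nonneg (sq_nonneg T) (pow_nonneg hq.le 4)]
    _ = divergence (hardyField ε φ) x := by
        unfold hardyField
        rw [divergence_smul hT.differentiableAt
          (hasFDerivAt_invBracket_pow_smul 2 x).differentiableAt, hT.fderiv,
          divergence_invBracket_pow_smul, map_smul, smul_apply]
        push_cast
        simp only [smul_eq_mul]
        ring

variable [MeasurableSpace E] [BorelSpace E]

theorem integral_invBracket_sq_mul_softThreshold_sq_le (hd : 3 ≤ Module.finrank ℝ E) {ε : ℝ}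
    (hε : 0 ≤ ε) {φ : E → ℝ} (hφ : ContDiff ℝ 1 φ)
    (hT : Integrable fun x => softThreshold ε (φ x) ^ 2)
    (hgrad : Integrable fun x => ‖fderiv ℝ φ x‖ ^ 2) :
    Integrable (fun x => invBracket x ^ 2 * softThreshold ε (φ x) ^ 2) ∧
      ∫ x, invBracket x ^ 2 * softThreshold ε (φ x) ^ 2 ≤ 4 * ∫ x, ‖fderiv ℝ φ x‖ ^ 2 := by
  have hφ' : Differentiable ℝ φ := hφ.differentiable one_ne_zero
  have hfield : Differentiable ℝ (hardyField ε φ) := fun x =>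
    (hasFDerivAt_hardyField hε (hφ' x)).differentiableAt
  have hq : Continuous (invBracket : E → ℝ) := (contDiff_invBracket (n := 0)).continuous
  have hleft : Integrable fun x => invBracket x ^ 2 * softThreshold ε (φ x) ^ 2 :=
    hT.bdd_mul (hq.pow 2).aestronglyMeasurable (ae_of_all _ fun x => by
      rw [norm_of_nonneg (sq_nonneg _)]
      exact pow_le_one₀ (invBracket_pos x).le (invBracket_le_one x))
  have hint : Integrable (hardyField ε φ) :=
    hT.mono hfield.continuous.aestronglyMeasurable (ae_of_all _ fun x => by
      rw [hardyField, norm_smul]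
      exact mul_le_of_le_one_right (norm_nonneg _) (norm_invBracket_sq_smul_le_one x))
  have hint' : Integrable (fderiv ℝ (hardyField ε φ)) :=
    ((hT.const_mul 4).add hgrad).mono' (measurable_fderiv ℝ _).aestronglyMeasurable
      (ae_of_all _ fun x => norm_fderiv_hardyField_le hε (hφ' x))
  have hle : ∫ x, (invBracket x ^ 2 * softThreshold ε (φ x) ^ 2 / 2 - 2 * ‖fderiv ℝ φ x‖ ^ 2)
      ≤ ∫ x, divergence (hardyField ε φ) x :=
    integral_mono ((hleft.div_const 2).sub (hgrad.const_mul 2)) (integrable_divergence hint')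
      fun x => le_divergence_hardyField hd hε (hφ' x)
  rw [integral_divergence_eq_zero hfield hint hint',
    integral_sub (hleft.div_const 2) (hgrad.const_mul 2), integral_div, integral_const_mul] at hle
  exact ⟨hleft, by linarith⟩

/-- Soft thresholds `T` of `φ` satisfy `T² ≤ C |φ|^r`, which gives the integrability needed for the
divergence theorem; Fatou's lemma removes the threshold. -/
theorem hardy_inequality (hd : 3 ≤ Module.finrank ℝ E) {r : ℝ} (hr : 2 ≤ r) {φ : E → ℝ}
    (hφ : ContDiff ℝ 1 φ) (hφr : Integrable fun x => |φ x| ^ r)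
    (hgrad : Integrable fun x => ‖fderiv ℝ φ x‖ ^ 2) :
    Integrable (fun x => invBracket x ^ 2 * φ x ^ 2) ∧
      ∫ x, invBracket x ^ 2 * φ x ^ 2 ≤ 4 * ∫ x, ‖fderiv ℝ φ x‖ ^ 2 := by
  have hε (n : ℕ) : 0 < 1 / ((n : ℝ) + 1) := by positivity
  have hT (n : ℕ) : Integrable fun x => softThreshold (1 / ((n : ℝ) + 1)) (φ x) ^ 2 := by
    refine (hφr.const_mul ((1 / ((n : ℝ) + 1)) ^ (2 - r))).mono'
      (((continuous_softThreshold _).comp hφ.continuous).pow 2).aestronglyMeasurable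
      (ae_of_all _ fun x => ?_)
    rw [norm_of_nonneg (sq_nonneg _)]
    exact softThreshold_sq_le_rpow (hε n) hr _
  have hstep (n : ℕ) := integral_invBracket_sq_mul_softThreshold_sq_le hd (hε n).le hφ (hT n) hgrad
  refine integrable_and_integral_le_of_tendsto (fun n => (hstep n).1)
    (fun n => ae_of_all _ fun x => by positivity) (fun n => (hstep n).2)
    (ae_of_all _ fun x => (tendsto_softThreshold_sq (φ x)).const_mul _)

end Hardy

section Slices

variable [NormedSpace ℝ E] {G : Type*} [NormedAddCommGroup G] [NormedSpace ℝ G] {f : E → ℝ → G}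
  {m n : WithTop ℕ∞}

theorem contDiff_fderiv_slice (hf : ContDiff ℝ n (Function.uncurry f)) (hmn : m + 1 ≤ n) :
    ContDiff ℝ m (Function.uncurry fun x t => fderiv ℝ (fun y => f y t) x) := by
  have hswap : ContDiff ℝ n (Function.uncurry fun (z : E × ℝ) (y : E) => f y z.2) :=
    hf.comp (contDiff_snd.prodMk (contDiff_snd.comp contDiff_fst))
  exact hswap.fderiv contDiff_fst hmn

theorem contDiff_deriv_slice (hf : ContDiff ℝ n (Function.uncurry f)) (hmn : m + 1 ≤ n) :
    ContDiff ℝ m (Function.uncurry fun x t => deriv (f x) t) := by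
  have hslice : ContDiff ℝ n (Function.uncurry fun (z : E × ℝ) (s : ℝ) => f z.1 s) :=
    hf.comp ((contDiff_fst.comp contDiff_fst).prodMk contDiff_snd)
  exact (hslice.fderiv contDiff_snd hmn).clm_apply contDiff_const

theorem contDiff_space_slice (hf : ContDiff ℝ n (Function.uncurry f)) (t : ℝ) :
    ContDiff ℝ n fun x => f x t :=
  hf.comp (contDiff_id.prodMk contDiff_const)

theorem contDiff_time_slice (hf : ContDiff ℝ n (Function.uncurry f)) (x : E) :
    ContDiff ℝ n (f x) :=
  hf.comp (contDiff_const.prodMk contDiff_id)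

end Slices

section ConservationLaw

variable [InnerProductSpace ℝ E] [FiniteDimensional ℝ E]

theorem exists_cutoff (R : ℝ) {δ : ℝ} (hδ : 0 < δ) : ∃ χ : E → ℝ, ContDiff ℝ 1 χ ∧
    HasCompactSupport χ ∧ (∀ x, 0 ≤ χ x) ∧ (∀ x, χ x ≤ 1) ∧ (∀ x, ‖x‖ ≤ R → χ x = 1) ∧
      ∀ x, ‖fderiv ℝ χ x‖ ≤ δ := by
  let f : ContDiffBump (0 : E) := ⟨1, 2, one_pos, one_lt_two⟩
  obtain ⟨C, hC⟩ := (f.hasCompactSupport.fderiv ℝ).exists_bound_of_continuous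
    ((f.contDiff (n := 1)).continuous_fderiv one_ne_zero)
  set L := max (max R 1) (C / δ)
  have hL : 0 < L := one_pos.trans_le ((le_max_right _ _).trans (le_max_left _ _))
  refine ⟨fun x => f (L⁻¹ • x), f.contDiff.comp (contDiff_const_smul _),
    f.hasCompactSupport.comp_smul (inv_ne_zero hL.ne'), fun _ => f.nonneg, fun _ => f.le_one,
    fun x hx => f.one_of_mem_closedBall ?_, fun x => ?_⟩
  · rw [mem_closedBall_zero_iff, norm_smul, norm_inv, norm_of_nonneg hL.le]
    exact inv_mul_le_one_of_le₀ (hx.trans ((le_max_left _ _).trans (le_max_left _ _))) hL.le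
  · rw [fderiv_comp_smul, norm_smul, norm_inv, norm_of_nonneg hL.le, inv_mul_le_iff₀ hL]
    exact (hC _).trans ((div_le_iff₀ hδ).1 (le_max_right _ _))

/-- The defect `div F - ∂ₜ P` in the conservation law `∂ₜ P = div F` of a density `P` with
flux `-F`. -/
noncomputable def production (P : E → ℝ → ℝ) (F : E → ℝ → E) (x : E) (t : ℝ) : ℝ :=
  divergence (fun y => F y t) x - deriv (P x) t

variable {P : E → ℝ → ℝ} {F : E → ℝ → E}

theorem continuous_divergence_slice {F : E → ℝ → E} (hF : ContDiff ℝ 1 (Function.uncurry F)) :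
    Continuous (Function.uncurry fun x t => divergence (fun y => F y t) x) := by
  have hcont := (contDiff_fderiv_slice (m := 0) hF (by simp)).continuous
  unfold divergence
  simp only [LinearMap.trace_eq_sum_inner _ (stdOrthonormalBasis ℝ E)]
  exact continuous_finsetSum _ fun i _ =>
    continuous_const.inner (hcont.clm_apply continuous_const)

theorem continuous_production (hP : ContDiff ℝ 1 (Function.uncurry P))
    (hF : ContDiff ℝ 1 (Function.uncurry F)) : Continuous (Function.uncurry (production P F)) :=
  (continuous_divergence_slice hF).sub (contDiff_deriv_slice (m := 0) hP (by simp)).continuous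

variable [MeasurableSpace E] [BorelSpace E]

theorem integral_mul_divergence {χ : E → ℝ} {X : E → E} (hχ : ContDiff ℝ 1 χ)
    (hχs : HasCompactSupport χ) (hX : ContDiff ℝ 1 X) :
    ∫ x, χ x * divergence X x = -∫ x, fderiv ℝ χ x (X x) := by
  have hfield : ContDiff ℝ 1 fun x => χ x • X x := hχ.smul hX
  have hsupp : HasCompactSupport fun x => χ x • X x := hχs.smul_right
  have hfield' := hfield.continuous_fderiv one_ne_zero
  have hzero := integral_divergence_eq_zero (hfield.differentiable one_ne_zero)
    (hfield.continuous.integrable_of_hasCompactSupport hsupp)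
    (hfield'.integrable_of_hasCompactSupport (hsupp.fderiv ℝ))
  have hflux : Integrable fun x => fderiv ℝ χ x (X x) :=
    Continuous.integrable_of_hasCompactSupport
      ((hχ.continuous_fderiv one_ne_zero).clm_apply hX.continuous)
      ((hχs.fderiv ℝ).mono' fun x hx => subset_tsupport _ fun h => hx (by simp [h]))
  have hdiv := integrable_divergence
    (hfield'.integrable_of_hasCompactSupport (hsupp.fderiv ℝ))
  rw [← zero_sub, ← hzero, ← integral_sub hdiv hflux]
  congr 1 with x
  rw [divergence_smul (hχ.differentiable one_ne_zero x) (hX.differentiable one_ne_zero x)]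
  ring

theorem setIntegral_tsupport_mul (χ g : E → ℝ) :
    ∫ x in tsupport χ, χ x * g x = ∫ x, χ x * g x :=
  setIntegral_eq_integral_of_forall_compl_eq_zero fun x hx => by
    rw [image_eq_zero_of_notMem_tsupport hx, zero_mul]

theorem continuous_integral_cutoff_mul {χ : E → ℝ} (hχ : Continuous χ)
    (hχs : HasCompactSupport χ) {G : E → ℝ → ℝ} (hG : Continuous (Function.uncurry G)) :
    Continuous fun t => ∫ x, χ x * G x t := by
  simp_rw [← setIntegral_tsupport_mul χ]
  exact continuous_parametric_integral_of_continuous (f := fun t x => χ x * G x t)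
    ((hχ.comp continuous_snd).mul (hG.comp continuous_swap)) hχs

theorem integral_integral_cutoff_mul_deriv {χ : E → ℝ} (hχ : Continuous χ)
    (hχs : HasCompactSupport χ) {P : E → ℝ → ℝ} (hP : ContDiff ℝ 1 (Function.uncurry P))
    (S T : ℝ) :
    ∫ t in S..T, ∫ x, χ x * deriv (P x) t = (∫ x, χ x * P x T) - ∫ x, χ x * P x S := by
  have hP' := (contDiff_deriv_slice (m := 0) hP (by simp)).continuous
  have hint (t : ℝ) : Integrable fun x => χ x * P x t :=
    (hχ.mul (contDiff_space_slice hP t).continuous).integrable_of_hasCompactSupport hχs.mul_right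
  have hftc (x : E) : ∫ t in S..T, χ x * deriv (P x) t = χ x * (P x T - P x S) := by
    have hPx := contDiff_time_slice hP x
    rw [intervalIntegral.integral_const_mul, intervalIntegral.integral_deriv_eq_sub
      (fun t _ => hPx.differentiable one_ne_zero t)
      ((hPx.continuous_deriv le_rfl).intervalIntegrable _ _)]
  have hprod : Continuous (Function.uncurry fun t x => χ x * deriv (P x) t) :=
    (hχ.comp continuous_snd).mul (hP'.comp continuous_swap)
  simp_rw [← setIntegral_tsupport_mul χ fun x => deriv (P x) _]
  rw [intervalIntegral_integral_swap, ← integral_sub (hint T) (hint S)]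
  · simp_rw [hftc, setIntegral_tsupport_mul, mul_sub]
  · rw [Measure.prod_restrict]
    exact (hprod.continuousOn.integrableOn_compact (isCompact_uIcc.prod hχs)).mono_set
      (Set.prod_mono Set.uIoc_subset_uIcc subset_rfl)

theorem integral_integral_cutoff_mul_production {χ : E → ℝ} (hχ : ContDiff ℝ 1 χ)
    (hχs : HasCompactSupport χ) (hP : ContDiff ℝ 1 (Function.uncurry P))
    (hF : ContDiff ℝ 1 (Function.uncurry F)) (S T : ℝ) :
    ∫ t in S..T, ∫ x, χ x * production P F x t
      = -(∫ t in S..T, ∫ x, fderiv ℝ χ x (F x t))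
        - ((∫ x, χ x * P x T) - ∫ x, χ x * P x S) := by
  have hdiv := continuous_divergence_slice hF
  have hP' := (contDiff_deriv_slice (m := 0) hP (by simp)).continuous
  have hint {g : E → ℝ → ℝ} (hg : Continuous (Function.uncurry g)) (t : ℝ) :
      Integrable fun x => χ x * g x t :=
    (hχ.continuous.mul (hg.comp (.prodMk_left t))).integrable_of_hasCompactSupport hχs.mul_right
  have hinterval {g : E → ℝ → ℝ} (hg : Continuous (Function.uncurry g)) :
      IntervalIntegrable (fun t => ∫ x, χ x * g x t) volume S T :=
    (continuous_integral_cutoff_mul hχ.continuous hχs hg).intervalIntegrable _ _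
  rw [← integral_integral_cutoff_mul_deriv hχ.continuous hχs hP, ← intervalIntegral.integral_neg]
  simp_rw [← fun t => integral_mul_divergence hχ hχs (contDiff_space_slice hF t)]
  rw [← intervalIntegral.integral_sub (hinterval hdiv) (hinterval hP')]
  congr 1 with t
  rw [← integral_sub (hint hdiv t) (hint hP' t)]
  simp only [production, mul_sub]

variable {J : E → ℝ → ℝ} {K : ℝ}

theorem integral_integral_cutoff_mul_production_le {χ : E → ℝ} (hχ : ContDiff ℝ 1 χ)
    (hχs : HasCompactSupport χ) (hχ0 : ∀ x, 0 ≤ χ x) (hχ1 : ∀ x, χ x ≤ 1) {δ : ℝ} (hδ : 0 ≤ δ)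
    (hχδ : ∀ x, ‖fderiv ℝ χ x‖ ≤ δ) (hP : ContDiff ℝ 1 (Function.uncurry P))
    (hF : ContDiff ℝ 1 (Function.uncurry F)) (hPJ : ∀ x t, |P x t| ≤ J x t)
    (hFJ : ∀ x t, ‖F x t‖ ≤ J x t) (hJ : ∀ t, Integrable fun x => J x t)
    (hJK : ∀ t, ∫ x, J x t ≤ K) {S T : ℝ} (hST : S ≤ T) :
    ∫ t in S..T, ∫ x, χ x * production P F x t ≤ 2 * K + δ * K * (T - S) := by
  have hboundary (t : ℝ) : ‖∫ x, χ x * P x t‖ ≤ K := by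
    refine (norm_integral_le_of_norm_le (hJ t) (ae_of_all _ fun x => ?_)).trans (hJK t)
    rw [norm_mul, norm_of_nonneg (hχ0 x)]
    exact (mul_le_of_le_one_left (norm_nonneg _) (hχ1 x)).trans (hPJ x t)
  have hflux (t : ℝ) : ‖∫ x, fderiv ℝ χ x (F x t)‖ ≤ δ * K := by
    refine (norm_integral_le_of_norm_le ((hJ t).const_mul δ) (ae_of_all _ fun x =>
      ((fderiv ℝ χ x).le_opNorm _).trans ?_)).trans ?_
    · gcongr
      exacts [hχδ x, hFJ x t]
    · rw [integral_const_mul]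
      gcongr
      exact hJK t
  have htime : ‖∫ t in S..T, ∫ x, fderiv ℝ χ x (F x t)‖ ≤ δ * K * (T - S) := by
    rw [← abs_of_nonneg (sub_nonneg.2 hST)]
    exact intervalIntegral.norm_integral_le_of_norm_le_const fun t _ => hflux t
  rw [integral_integral_cutoff_mul_production hχ hχs hP hF]
  linarith [(abs_le.1 (hboundary T)).1, (abs_le.1 (hboundary S)).2, (abs_le.1 htime).1]

theorem continuous_setIntegral_closedBall {g : E → ℝ → ℝ} (hg : Continuous (Function.uncurry g))
    (R : ℝ) : Continuous fun t => ∫ x in Metric.closedBall (0 : E) R, g x t :=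
  continuous_parametric_integral_of_continuous (f := fun t x => g x t) (hg.comp continuous_swap)
    (isCompact_closedBall 0 R)

theorem integral_setIntegral_production_le (hP : ContDiff ℝ 1 (Function.uncurry P))
    (hF : ContDiff ℝ 1 (Function.uncurry F)) (hD : ∀ x t, 0 ≤ production P F x t)
    (hPJ : ∀ x t, |P x t| ≤ J x t) (hFJ : ∀ x t, ‖F x t‖ ≤ J x t)
    (hJ : ∀ t, Integrable fun x => J x t) (hJK : ∀ t, ∫ x, J x t ≤ K) (R : ℝ) {S T : ℝ}
    (hST : S ≤ T) :
    ∫ t in S..T, ∫ x in Metric.closedBall (0 : E) R, production P F x t ≤ 2 * K := by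
  have hK : 0 ≤ K := (integral_nonneg fun x => (norm_nonneg _).trans (hFJ x 0)).trans (hJK 0)
  have hcont := continuous_production hP hF
  refine le_of_forall_pos_le_add fun ε hε => ?_
  have hden : 0 < K * (T - S) + 1 := by nlinarith
  obtain ⟨χ, hχ, hχs, hχ0, hχ1, hχR, hχδ⟩ := exists_cutoff (E := E) R (div_pos hε hden)
  have hlocal (t : ℝ) : ∫ x in Metric.closedBall (0 : E) R, production P F x t
      ≤ ∫ x, χ x * production P F x t := by
    have hint : Integrable fun x => χ x * production P F x t :=
      (hχ.continuous.mul (hcont.comp (.prodMk_left t))).integrable_of_hasCompactSupport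
        hχs.mul_right
    calc _ = ∫ x in Metric.closedBall (0 : E) R, χ x * production P F x t :=
          setIntegral_congr_fun measurableSet_closedBall fun x hx => by
            simp [hχR x (mem_closedBall_zero_iff.1 hx)]
      _ ≤ _ := setIntegral_le_integral hint (ae_of_all _ fun x => mul_nonneg (hχ0 x) (hD x t))
  calc _ ≤ ∫ t in S..T, ∫ x, χ x * production P F x t :=
        intervalIntegral.integral_mono hST
          ((continuous_setIntegral_closedBall hcont R).intervalIntegrable _ _)
          ((continuous_integral_cutoff_mul hχ.continuous hχs hcont).intervalIntegrable _ _) hlocal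
    _ ≤ 2 * K + ε / (K * (T - S) + 1) * K * (T - S) :=
        integral_integral_cutoff_mul_production_le hχ hχs hχ0 hχ1 (by positivity) hχδ hP hF hPJ hFJ
          hJ hJK hST
    _ ≤ 2 * K + ε := by
        gcongr
        rw [mul_assoc, div_mul_eq_mul_div, div_le_iff₀ hden]
        nlinarith

end ConservationLaw

section Gradient

variable [InnerProductSpace ℝ E] [CompleteSpace E]

theorem contDiff_gradient {φ : E → ℝ} {m n : WithTop ℕ∞} (hφ : ContDiff ℝ n φ)
    (hmn : m + 1 ≤ n) : ContDiff ℝ m (∇ φ) :=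
  (InnerProductSpace.toDual ℝ E).symm.contDiff.comp (hφ.fderiv_right hmn)

theorem norm_gradient (φ : E → ℝ) (x : E) : ‖∇ φ x‖ = ‖fderiv ℝ φ x‖ :=
  (InnerProductSpace.toDual ℝ E).symm.norm_map _

theorem inner_fderiv_gradient {φ : E → ℝ} (hφ : ContDiff ℝ 2 φ) (x y z : E) :
    ⟪fderiv ℝ (∇ φ) x y, z⟫ = fderiv ℝ (fderiv ℝ φ) x y z := by
  have hdiff : DifferentiableAt ℝ (fderiv ℝ φ) x :=
    (hφ.fderiv_right (m := 1) le_rfl).differentiable one_ne_zero x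
  rw [(((InnerProductSpace.toDual ℝ E).symm.toContinuousLinearEquiv.hasFDerivAt).comp x
    hdiff.hasFDerivAt).fderiv (f := ∇ φ)]
  exact InnerProductSpace.toDual_symm_apply

theorem inner_fderiv_gradient_comm {φ : E → ℝ} (hφ : ContDiff ℝ 2 φ) (x y z : E) :
    ⟪fderiv ℝ (∇ φ) x y, z⟫ = ⟪fderiv ℝ (∇ φ) x z, y⟫ := by
  rw [inner_fderiv_gradient hφ, inner_fderiv_gradient hφ]
  exact (hφ.contDiffAt.isSymmSndFDerivAt (by simp)).eq y z

theorem divergence_gradient_eq_sum {ι : Type*} [Fintype ι] (b : OrthonormalBasis ι ℝ E) {φ : E → ℝ}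
    (hφ : ContDiff ℝ 2 φ) (x : E) :
    divergence (∇ φ) x = ∑ i, fderiv ℝ (fun y => fderiv ℝ φ y (b i)) x (b i) := by
  have hdiff : DifferentiableAt ℝ (fderiv ℝ φ) x :=
    (hφ.fderiv_right (m := 1) le_rfl).differentiable one_ne_zero x
  rw [divergence, LinearMap.trace_eq_sum_inner _ b]
  refine Finset.sum_congr rfl fun i _ => ?_
  rw [real_inner_comm, ContinuousLinearMap.coe_coe, inner_fderiv_gradient hφ,
    (hdiff.hasFDerivAt.clm_apply (hasFDerivAt_const (b i) x)).fderiv]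
  simp

variable {u : E → ℝ → ℝ}

theorem contDiff_gradient_slice {m n : WithTop ℕ∞} (hu : ContDiff ℝ n (Function.uncurry u))
    (hmn : m + 1 ≤ n) : ContDiff ℝ m (Function.uncurry fun x t => ∇ (fun y => u y t) x) :=
  (InnerProductSpace.toDual ℝ E).symm.contDiff.comp (contDiff_fderiv_slice hu hmn)

theorem hasDerivAt_gradient_slice (hu : ContDiff ℝ 2 (Function.uncurry u)) (x : E) (t : ℝ) :
    HasDerivAt (fun s => ∇ (fun y => u y s) x) (∇ (fun y => deriv (u y) t) x) t := by
  have hu' : DifferentiableAt ℝ (fderiv ℝ (Function.uncurry u)) (x, t) :=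
    (hu.fderiv_right (m := 1) le_rfl).differentiable one_ne_zero _
  have hspace (s : ℝ) : fderiv ℝ (fun y => u y s) x
      = (fderiv ℝ (Function.uncurry u) (x, s)).comp (.inl ℝ E ℝ) :=
    ((hu.differentiable two_ne_zero (x, s)).hasFDerivAt.comp (f := fun y => (y, s)) x
      (hasFDerivAt_prodMk_left x s)).fderiv
  have htime (y : E) : deriv (u y) t = fderiv ℝ (Function.uncurry u) (y, t) (0, 1) :=
    ((hu.differentiable two_ne_zero (y, t)).hasFDerivAt.comp_hasDerivAt t
      ((hasDerivAt_const t y).prodMk (hasDerivAt_id' t))).deriv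
  have hmixed : fderiv ℝ (fun y => deriv (u y) t) x
      = (fderiv ℝ (fderiv ℝ (Function.uncurry u)) (x, t) (0, 1)).comp (.inl ℝ E ℝ) := by
    simp_rw [htime]
    rw [((hu'.hasFDerivAt.comp x (hasFDerivAt_prodMk_left x t)).clm_apply
      (hasFDerivAt_const ((0 : E), (1 : ℝ)) x)).fderiv (f := fun y =>
        fderiv ℝ (Function.uncurry u) (y, t) (0, 1))]
    ext z
    simpa using (hu.contDiffAt.isSymmSndFDerivAt (by simp)).eq (z, 0) (0, 1)
  simp only [gradient, hspace, hmixed]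
  have hpath : HasDerivAt (fun s => fderiv ℝ (Function.uncurry u) (x, s))
      (fderiv ℝ (fderiv ℝ (Function.uncurry u)) (x, t) (0, 1)) t :=
    hu'.hasFDerivAt.comp_hasDerivAt (f := fun s => (x, s))
      (l := fderiv ℝ (Function.uncurry u)) t
      ((hasDerivAt_const t x).prodMk (hasDerivAt_id' t))
  exact (InnerProductSpace.toDual ℝ E).symm.toContinuousLinearEquiv.hasFDerivAt.comp_hasDerivAt t
    (((ContinuousLinearMap.compL ℝ E (E × ℝ) ℝ).flip (.inl ℝ E ℝ)).hasFDerivAt.comp_hasDerivAt t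
      hpath)

end Gradient

section Morawetz

variable [InnerProductSpace ℝ E] [FiniteDimensional ℝ E]

/-- `u` is a `C²` solution of the semilinear wave equation `∂ₜ²u - Δu = -V'(u)`. -/
structure IsWaveSolution (V : ℝ → ℝ) (u : E → ℝ → ℝ) : Prop where
  contDiff : ContDiff ℝ 2 (Function.uncurry u)
  wave_eq : ∀ x t, deriv (deriv (u x)) t - divergence (∇ fun y => u y t) x = -deriv V (u x t)

/-- The Lagrangian density `(|∂ₜu|² - |∇u|²) / 2 - V(u)`. -/
noncomputable def lagrangian (V : ℝ → ℝ) (u : E → ℝ → ℝ) (x : E) (t : ℝ) : ℝ :=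
  (deriv (u x) t ^ 2 - ‖∇ (fun y => u y t) x‖ ^ 2) / 2 - V (u x t)

/-- The multiplier `X · ∇u + g u` of a Morawetz identity. -/
noncomputable def multiplier (X : E → E) (g : E → ℝ) (u : E → ℝ → ℝ) (x : E) (t : ℝ) : ℝ :=
  ⟪X x, ∇ (fun y => u y t) x⟫ + g x * u x t

/-- The density `∂ₜu (X · ∇u + g u)` of a Morawetz identity. -/
noncomputable def momentum (X : E → E) (g : E → ℝ) (u : E → ℝ → ℝ) (x : E) (t : ℝ) : ℝ :=
  deriv (u x) t * multiplier X g u x t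

/-- The flux of a Morawetz identity, with the sign convention `∂ₜ P = div F + …`. -/
noncomputable def momentumFlux (V : ℝ → ℝ) (X : E → E) (g : E → ℝ) (u : E → ℝ → ℝ) (x : E)
    (t : ℝ) : E :=
  multiplier X g u x t • ∇ (fun y => u y t) x + lagrangian V u x t • X x
    - (u x t ^ 2 / 2) • ∇ g x

variable {V : ℝ → ℝ} {X : E → E} {g : E → ℝ} {u : E → ℝ → ℝ}

theorem contDiff_multiplier (hX : ContDiff ℝ 1 X) (hg : ContDiff ℝ 1 g)
    (hu : ContDiff ℝ 2 (Function.uncurry u)) :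
    ContDiff ℝ 1 (Function.uncurry (multiplier X g u)) :=
  ((hX.comp contDiff_fst).inner ℝ (contDiff_gradient_slice hu le_rfl)).add
    ((hg.comp contDiff_fst).mul (hu.of_le one_le_two))

theorem contDiff_momentum (hX : ContDiff ℝ 1 X) (hg : ContDiff ℝ 1 g)
    (hu : ContDiff ℝ 2 (Function.uncurry u)) :
    ContDiff ℝ 1 (Function.uncurry (momentum X g u)) :=
  (contDiff_deriv_slice hu le_rfl).mul (contDiff_multiplier hX hg hu)

theorem contDiff_lagrangian (hV : ContDiff ℝ 1 V) (hu : ContDiff ℝ 2 (Function.uncurry u)) :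
    ContDiff ℝ 1 (Function.uncurry (lagrangian V u)) :=
  ((((contDiff_deriv_slice hu le_rfl).pow 2).sub
    ((contDiff_gradient_slice hu le_rfl).norm_sq ℝ)).div_const 2).sub
    (hV.comp (hu.of_le one_le_two))

theorem contDiff_momentumFlux (hV : ContDiff ℝ 1 V) (hX : ContDiff ℝ 1 X) (hg : ContDiff ℝ 2 g)
    (hu : ContDiff ℝ 2 (Function.uncurry u)) :
    ContDiff ℝ 1 (Function.uncurry (momentumFlux V X g u)) :=
  (((contDiff_multiplier hX (hg.of_le one_le_two) hu).smul (contDiff_gradient_slice hu le_rfl)).add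
    ((contDiff_lagrangian hV hu).smul (hX.comp contDiff_fst))).sub
    ((((hu.of_le one_le_two).pow 2).div_const 2).smul
      ((contDiff_gradient hg le_rfl).comp contDiff_fst))

theorem fderiv_multiplier_slice (hX : Differentiable ℝ X) (hg : Differentiable ℝ g)
    (hu : ContDiff ℝ 2 (Function.uncurry u)) (x y : E) (t : ℝ) :
    fderiv ℝ (fun z => multiplier X g u z t) x y
      = ⟪fderiv ℝ X x y, ∇ (fun z => u z t) x⟫ + ⟪X x, fderiv ℝ (∇ fun z => u z t) x y⟫
        + fderiv ℝ g x y * u x t + g x * ⟪∇ (fun z => u z t) x, y⟫ := by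
  have hw := ((contDiff_gradient (contDiff_space_slice hu t) (m := 1) le_rfl).differentiable
    one_ne_zero x)
  have hux := (contDiff_space_slice hu t).differentiable two_ne_zero x
  unfold multiplier
  rw [fderiv_fun_add ((hX x).inner ℝ hw) ((hg x).fun_mul hux), fderiv_fun_mul (hg x) hux]
  simp only [add_apply, smul_apply, fderiv_inner_apply ℝ (hX x) hw, smul_eq_mul,
    inner_gradient_left]
  ring

theorem fderiv_lagrangian_slice (hV : Differentiable ℝ V)
    (hu : ContDiff ℝ 2 (Function.uncurry u)) (x y : E) (t : ℝ) :
    fderiv ℝ (fun z => lagrangian V u z t) x y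
      = deriv (u x) t * fderiv ℝ (fun z => deriv (u z) t) x y
        - ⟪∇ (fun z => u z t) x, fderiv ℝ (∇ fun z => u z t) x y⟫
        - deriv V (u x t) * ⟪∇ (fun z => u z t) x, y⟫ := by
  have hw := (contDiff_gradient (contDiff_space_slice hu t) (m := 1) le_rfl).differentiable
    one_ne_zero x
  have hv := (contDiff_space_slice (contDiff_deriv_slice hu (m := 1) le_rfl) t).differentiable
    one_ne_zero x
  have hux := (contDiff_space_slice hu t).differentiable two_ne_zero x
  rw [((((hv.hasFDerivAt.pow 2).sub hw.hasFDerivAt.norm_sq).mul_const 2⁻¹).sub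
    ((hV (u x t)).hasDerivAt.comp_hasFDerivAt x hux.hasFDerivAt)).fderiv
      (f := fun z => lagrangian V u z t)]
  simp only [Nat.add_one_sub_one, pow_one, nsmul_eq_mul, Nat.cast_ofNat, sub_apply, smul_apply,
    smul_eq_mul, ContinuousLinearMap.comp_apply, coe_innerSL_apply, inner_gradient_left,
    sub_left_inj]
  ring

theorem deriv_momentum (hu : ContDiff ℝ 2 (Function.uncurry u)) (x : E) (t : ℝ) :
    deriv (momentum X g u x) t
      = deriv (deriv (u x)) t * multiplier X g u x t
        + deriv (u x) t * (⟪X x, ∇ (fun y => deriv (u y) t) x⟫ + g x * deriv (u x) t) := by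
  have hux := contDiff_time_slice hu x
  have hv := (contDiff_time_slice (contDiff_deriv_slice hu (m := 1) le_rfl) x).differentiable
    one_ne_zero t
  have hm : HasDerivAt (multiplier X g u x)
      (⟪X x, ∇ (fun y => deriv (u y) t) x⟫ + g x * deriv (u x) t) t :=
    ((hasDerivAt_const t (X x)).inner ℝ (hasDerivAt_gradient_slice hu x t)).add
      ((hux.differentiable two_ne_zero t).hasDerivAt.const_mul (g x)) |>.congr_deriv (by simp)
  exact (hv.hasDerivAt.mul hm).deriv

theorem divergence_momentumFlux (hV : ContDiff ℝ 1 V) (hX : ContDiff ℝ 1 X) (hg : ContDiff ℝ 2 g)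
    (hu : ContDiff ℝ 2 (Function.uncurry u)) (x : E) (t : ℝ) :
    divergence (fun y => momentumFlux V X g u y t) x
      = multiplier X g u x t * divergence (∇ fun y => u y t) x
        + fderiv ℝ (fun y => multiplier X g u y t) x (∇ (fun y => u y t) x)
        + lagrangian V u x t * divergence X x + fderiv ℝ (fun y => lagrangian V u y t) x (X x)
        - u x t ^ 2 / 2 * divergence (∇ g) x - u x t * fderiv ℝ g x (∇ (fun y => u y t) x) := by
  have hw := (contDiff_gradient (contDiff_space_slice hu t) (m := 1) le_rfl).differentiable
    one_ne_zero x
  have hm := (contDiff_space_slice (contDiff_multiplier hX (hg.of_le one_le_two) hu)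
    t).differentiable one_ne_zero x
  have hl := (contDiff_space_slice (contDiff_lagrangian hV hu) t).differentiable one_ne_zero x
  have hux := (contDiff_space_slice hu t).differentiable two_ne_zero x
  have hX' := hX.differentiable one_ne_zero x
  have hg' := (contDiff_gradient hg (m := 1) le_rfl).differentiable one_ne_zero x
  have hu2 : HasFDerivAt (fun y => u y t ^ 2 / 2) (u x t • fderiv ℝ (fun y => u y t) x) x :=
    ((hux.hasFDerivAt.pow 2).mul_const 2⁻¹).congr_fderiv (by
      ext
      simp only [Nat.add_one_sub_one, pow_one, nsmul_eq_mul, Nat.cast_ofNat, smul_apply,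
        smul_eq_mul]
      ring)
  unfold momentumFlux
  rw [divergence_sub ((hm.fun_smul hw).fun_add (hl.fun_smul hX'))
      (hu2.differentiableAt.fun_smul hg'),
    divergence_add (hm.fun_smul hw) (hl.fun_smul hX'), divergence_smul hm hw,
    divergence_smul hl hX', divergence_smul hu2.differentiableAt hg', hu2.fderiv]
  have hgu : fderiv ℝ (fun y => u y t) x (∇ g x) = fderiv ℝ g x (∇ (fun y => u y t) x) := by
    rw [← inner_gradient_left, real_inner_comm, inner_gradient_left]
  rw [smul_apply, smul_eq_mul, hgu]
  ring

theorem production_momentum (hu : IsWaveSolution V u) (hV : ContDiff ℝ 1 V) (hX : ContDiff ℝ 1 X)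
    (hg : ContDiff ℝ 2 g) (x : E) (t : ℝ) :
    production (momentum X g u) (momentumFlux V X g u) x t
      = ⟪fderiv ℝ X x (∇ (fun y => u y t) x), ∇ (fun y => u y t) x⟫
        + (g x - divergence X x / 2) * (‖∇ (fun y => u y t) x‖ ^ 2 - deriv (u x) t ^ 2)
        + g x * (u x t * deriv V (u x t)) - divergence X x * V (u x t)
        - u x t ^ 2 / 2 * divergence (∇ g) x := by
  have hhess := inner_fderiv_gradient_comm (contDiff_space_slice hu.contDiff t) x (X x)
    (∇ (fun y => u y t) x)
  rw [real_inner_comm, real_inner_comm (X x)] at hhess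
  rw [production, divergence_momentumFlux hV hX hg hu.contDiff, deriv_momentum hu.contDiff,
    fderiv_multiplier_slice (hX.differentiable one_ne_zero) (hg.differentiable two_ne_zero)
      hu.contDiff, fderiv_lagrangian_slice (hV.differentiable one_ne_zero) hu.contDiff,
    sub_eq_iff_eq_add.1 (hu.wave_eq x t), real_inner_self_eq_norm_sq, lagrangian, multiplier,
    real_inner_comm _ (X x), ← inner_gradient_left (f := fun z => deriv (u z) t),
    real_inner_comm (X x) (∇ (fun z => deriv (u z) t) x)]
  linear_combination -hhess

end Morawetz

section MorawetzField

/-- The radial vector field `⟨x⟩⁻¹ x` of the Morawetz multiplier. The exponent `1` matches the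
lemmas on `⟨x⟩⁻ⁿ x`. -/
noncomputable def morawetzField [NormedSpace ℝ E] (x : E) : E :=
  invBracket x ^ 1 • x

variable [InnerProductSpace ℝ E]

theorem contDiff_morawetzField {n : WithTop ℕ∞} : ContDiff ℝ n (morawetzField : E → E) :=
  (contDiff_invBracket.pow 1).smul contDiff_id

theorem norm_morawetzField_le_one (x : E) : ‖morawetzField x‖ ≤ 1 :=
  norm_invBracket_pow_succ_smul_le 0 x

theorem le_inner_fderiv_morawetzField (x w : E) :
    invBracket x ^ 3 * ‖w‖ ^ 2 ≤ ⟪fderiv ℝ morawetzField x w, w⟫ := by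
  have hq := invBracket_pos x
  have hcs : ⟪x, w⟫ ^ 2 ≤ ‖x‖ ^ 2 * ‖w‖ ^ 2 := by
    rw [← mul_pow]
    exact sq_le_sq' (neg_le_of_abs_le (abs_real_inner_le_norm x w)) (real_inner_le_norm x w)
  calc invBracket x ^ 3 * ‖w‖ ^ 2
      = invBracket x * ‖w‖ ^ 2 - invBracket x ^ 3 * (‖x‖ ^ 2 * ‖w‖ ^ 2) := by
        linear_combination invBracket x * ‖w‖ ^ 2 * invBracket_sq_mul_norm_sq x
    _ ≤ invBracket x * ‖w‖ ^ 2 - invBracket x ^ 3 * ⟪x, w⟫ ^ 2 := by gcongr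
    _ = ⟪fderiv ℝ morawetzField x w, w⟫ := by
        rw [(hasFDerivAt_invBracket_pow_smul 1 x).fderiv (f := morawetzField)]
        simp only [sub_apply, smul_apply, ContinuousLinearMap.id_apply,
          ContinuousLinearMap.smulRight_apply, innerSL_apply_apply, inner_sub_left,
          real_inner_smul_left, real_inner_self_eq_norm_sq]
        push_cast
        ring

variable [FiniteDimensional ℝ E]

theorem divergence_morawetzField (x : E) :
    divergence morawetzField x
      = (Module.finrank ℝ E - 1) * invBracket x + invBracket x ^ 3 := by
  unfold morawetzField
  simpa using divergence_invBracket_pow_smul 1 x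

end MorawetzField

section MorawetzWeight

variable [InnerProductSpace ℝ E]

/-- The zeroth order weight paired with the vector field `⟨x⟩⁻¹ x` in the Morawetz multiplier. Its
leading coefficient `(dim E - 1) / 2` makes it half the divergence of that field up to a multiple
of `⟨x⟩⁻³`. -/
noncomputable def morawetzWeight (b : ℝ) (x : E) : ℝ :=
  (Module.finrank ℝ E - 1) / 2 * invBracket x + b * invBracket x ^ 3

variable {b : ℝ}

theorem contDiff_morawetzWeight {n : WithTop ℕ∞} : ContDiff ℝ n (morawetzWeight b : E → ℝ) :=
  (contDiff_const.mul contDiff_invBracket).add (contDiff_const.mul (contDiff_invBracket.pow 3))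

theorem morawetzWeight_nonneg (hd : 1 ≤ Module.finrank ℝ E) (hb : 0 ≤ b) (x : E) :
    0 ≤ morawetzWeight b x := by
  have hq := invBracket_pos x
  have hd' : (0 : ℝ) ≤ Module.finrank ℝ E - 1 := sub_nonneg.2 (mod_cast hd)
  unfold morawetzWeight
  positivity

theorem morawetzWeight_le (hb : 0 ≤ b) (hb' : b ≤ 1 / 2) (x : E) :
    morawetzWeight b x ≤ Module.finrank ℝ E * invBracket x := by
  have hq := invBracket_pos x
  have hcube : invBracket x ^ 3 ≤ invBracket x :=
    pow_le_of_le_one hq.le (invBracket_le_one x) three_ne_zero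
  unfold morawetzWeight
  nlinarith [Nat.cast_nonneg (α := ℝ) (Module.finrank ℝ E)]

variable [FiniteDimensional ℝ E]

theorem gradient_morawetzWeight (x : E) :
    ∇ (morawetzWeight b) x
      = (-((Module.finrank ℝ E - 1) / 2 : ℝ)) • invBracket x ^ 3 • x
        + (-(3 * b)) • invBracket x ^ 5 • x := by
  refine HasGradientAt.gradient (hasGradientAt_iff_hasFDerivAt.2 ?_)
  refine (((hasFDerivAt_invBracket x).const_mul _).add
    ((hasFDerivAt_invBracket_pow 3 x).const_mul b)).congr_fderiv ?_
  ext y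
  simp only [neg_smul, smul_neg, Nat.cast_ofNat, Nat.reduceAdd, add_apply, neg_apply, smul_apply,
    coe_innerSL_apply, smul_eq_mul, map_add, map_neg, map_smul,
    InnerProductSpace.toDual_apply_apply, add_right_inj, neg_inj]
  ring

theorem norm_gradient_morawetzWeight_le (hd : 1 ≤ Module.finrank ℝ E) (hb : 0 ≤ b)
    (hb' : b ≤ 1 / 2) (x : E) :
    ‖∇ (morawetzWeight b) x‖ ≤ (Module.finrank ℝ E + 2) / 2 * invBracket x ^ 2 := by
  have hq := invBracket_pos x
  have hd' : (0 : ℝ) ≤ Module.finrank ℝ E - 1 := sub_nonneg.2 (mod_cast hd)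
  have hfour : invBracket x ^ 4 ≤ invBracket x ^ 2 :=
    pow_le_pow_of_le_one hq.le (invBracket_le_one x) (by norm_num)
  calc ‖∇ (morawetzWeight b) x‖
      ≤ (Module.finrank ℝ E - 1) / 2 * invBracket x ^ 2 + 3 * b * invBracket x ^ 4 := by
        rw [gradient_morawetzWeight]
        refine norm_add_le_of_le ?_ ?_
        · rw [norm_smul, norm_neg, norm_of_nonneg (by positivity)]
          gcongr
          exact norm_invBracket_pow_succ_smul_le 2 x
        · rw [norm_smul, norm_neg, norm_of_nonneg (by positivity)]
          gcongr
          exact norm_invBracket_pow_succ_smul_le 4 x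
    _ ≤ (Module.finrank ℝ E - 1) / 2 * invBracket x ^ 2 + 3 * (1 / 2) * invBracket x ^ 2 := by
        gcongr
    _ = (Module.finrank ℝ E + 2) / 2 * invBracket x ^ 2 := by ring

theorem divergence_gradient_morawetzWeight_nonpos (hd : 3 ≤ Module.finrank ℝ E) (hb : 0 ≤ b)
    (hb' : b ≤ 1 / 2) (x : E) : divergence (∇ (morawetzWeight b)) x ≤ 0 := by
  have hq := invBracket_pos x
  have hd' : (0 : ℝ) ≤ Module.finrank ℝ E - 3 := sub_nonneg.2 (mod_cast hd)
  have hfield (n : ℕ) : DifferentiableAt ℝ (fun y : E => invBracket y ^ n • y) x :=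
    (hasFDerivAt_invBracket_pow_smul n x).differentiableAt
  have hlaplacian : divergence (∇ (morawetzWeight b)) x
      = -((Module.finrank ℝ E - 3)
          * ((Module.finrank ℝ E - 1) / 2 * invBracket x ^ 3 + 3 * b * invBracket x ^ 5)
        + 3 * ((Module.finrank ℝ E - 3) / 2 + 2 * (1 / 2 - b)) * invBracket x ^ 5
        + 15 * b * invBracket x ^ 7) := by
    rw [funext gradient_morawetzWeight, divergence_add ((hfield 3).fun_const_smul _)
      ((hfield 5).fun_const_smul _), divergence_const_smul (hfield 3),
      divergence_const_smul (hfield 5), divergence_invBracket_pow_smul,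
      divergence_invBracket_pow_smul]
    push_cast
    ring
  have hd1 : (0 : ℝ) ≤ Module.finrank ℝ E - 1 := by linarith
  have : 0 ≤ 1 / 2 - b := sub_nonneg.2 hb'
  rw [hlaplacian, neg_nonpos]
  positivity

end MorawetzWeight

section MorawetzEstimate

/-- The energy density `|∇u|² / 2 + |∂ₜu|² / 2 + V(u)`. -/
noncomputable def energyDensity [InnerProductSpace ℝ E] [CompleteSpace E] (V : ℝ → ℝ)
    (u : E → ℝ → ℝ) (x : E) (t : ℝ) : ℝ :=
  ‖∇ (fun y => u y t) x‖ ^ 2 / 2 + deriv (u x) t ^ 2 / 2 + V (u x t)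

/-- The potential of a defocusing nonlinearity: `V` is nonnegative and grows superquadratically in
the sense of Ambrosetti and Rabinowitz. For `V(s) = |s|ᵖ⁺¹ / (p + 1)` one has `γ = p + 1`. -/
structure IsDefocusing (V : ℝ → ℝ) (γ : ℝ) : Prop where
  contDiff : ContDiff ℝ 1 V
  nonneg : ∀ s, 0 ≤ V s
  two_lt : 2 < γ
  mul_le : ∀ s, γ * V s ≤ s * deriv V s

variable {V : ℝ → ℝ} {γ : ℝ}

theorem IsDefocusing.inv_pos (hV : IsDefocusing V γ) : 0 < γ⁻¹ :=
  _root_.inv_pos.2 (zero_lt_two.trans hV.two_lt)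

theorem IsDefocusing.inv_lt_half (hV : IsDefocusing V γ) : γ⁻¹ < 1 / 2 :=
  (one_div (2 : ℝ)).symm ▸ inv_strictAnti₀ zero_lt_two hV.two_lt

variable [InnerProductSpace ℝ E] [FiniteDimensional ℝ E] {u : E → ℝ → ℝ}

theorem energyDensity_nonneg (hV0 : ∀ s, 0 ≤ V s) (x : E) (t : ℝ) : 0 ≤ energyDensity V u x t := by
  have := hV0 (u x t)
  unfold energyDensity
  positivity

theorem continuous_energyDensity (hV : Continuous V) (hu : ContDiff ℝ 2 (Function.uncurry u)) :
    Continuous (Function.uncurry (energyDensity V u)) :=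
  (((((contDiff_gradient_slice (m := 1) hu le_rfl).continuous.norm.pow 2).div_const 2).add
    (((contDiff_deriv_slice (m := 1) hu le_rfl).continuous.pow 2).div_const 2)).add
      (hV.comp hu.continuous))

theorem abs_lagrangian_le (hV0 : ∀ s, 0 ≤ V s) (x : E) (t : ℝ) :
    |lagrangian V u x t| ≤ energyDensity V u x t := by
  have := hV0 (u x t)
  rw [lagrangian, energyDensity, abs_le]
  constructor <;>
    linarith [sq_nonneg (deriv (u x) t), sq_nonneg ‖∇ (fun y => u y t) x‖]

variable {X : E → E} {g : E → ℝ} {M : ℝ}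

theorem abs_multiplier_le {x : E} (hX : ‖X x‖ ≤ 1) (hg : |g x| ≤ M * invBracket x) (t : ℝ) :
    |multiplier X g u x t| ≤ ‖∇ (fun y => u y t) x‖ + M * (invBracket x * |u x t|) := by
  refine (abs_add_le _ _).trans (add_le_add ?_ ?_)
  · exact (abs_real_inner_le_norm _ _).trans (mul_le_of_le_one_left (norm_nonneg _) hX)
  · rw [abs_mul, ← mul_assoc]
    gcongr

theorem abs_momentum_le {x : E} (hX : ‖X x‖ ≤ 1) (hg : |g x| ≤ M * invBracket x)
    (hV0 : ∀ s, 0 ≤ V s) (t : ℝ) :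
    |momentum X g u x t|
      ≤ 2 * energyDensity V u x t + M ^ 2 * (invBracket x ^ 2 * u x t ^ 2) := by
  have hm := abs_multiplier_le (u := u) hX hg t
  have := hV0 (u x t)
  rw [momentum, abs_mul, energyDensity, ← sq_abs (u x t), ← sq_abs (deriv (u x) t)]
  nlinarith [mul_le_mul_of_nonneg_left hm (abs_nonneg (deriv (u x) t)),
    sq_nonneg (|deriv (u x) t| - ‖∇ (fun y => u y t) x‖),
    sq_nonneg (|deriv (u x) t| - M * (invBracket x * |u x t|))]

theorem norm_momentumFlux_le {x : E} (hX : ‖X x‖ ≤ 1) (hg : |g x| ≤ M * invBracket x)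
    (hg' : ‖∇ g x‖ ≤ M * invBracket x ^ 2) (hV0 : ∀ s, 0 ≤ V s) (t : ℝ) :
    ‖momentumFlux V X g u x t‖
      ≤ 4 * energyDensity V u x t + (M ^ 2 + M) * (invBracket x ^ 2 * u x t ^ 2) := by
  have hm := abs_multiplier_le (u := u) hX hg t
  have hl := abs_lagrangian_le (u := u) hV0 x t
  have := hV0 (u x t)
  calc ‖momentumFlux V X g u x t‖
      ≤ |multiplier X g u x t| * ‖∇ (fun y => u y t) x‖ + |lagrangian V u x t| * ‖X x‖
          + u x t ^ 2 / 2 * ‖∇ g x‖ := by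
        refine (norm_sub_le _ _).trans (add_le_add ((norm_add_le _ _).trans_eq ?_) ?_)
        · rw [norm_smul, norm_smul, Real.norm_eq_abs, Real.norm_eq_abs]
        · rw [norm_smul, norm_of_nonneg (by positivity)]
    _ ≤ (‖∇ (fun y => u y t) x‖ + M * (invBracket x * |u x t|)) * ‖∇ (fun y => u y t) x‖
          + energyDensity V u x t * 1 + u x t ^ 2 / 2 * (M * invBracket x ^ 2) := by
        gcongr
        exact (abs_nonneg _).trans hl
    _ ≤ _ := by
        have hM : 0 ≤ M * invBracket x ^ 2 := (norm_nonneg _).trans hg'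
        rw [energyDensity, ← sq_abs (u x t)]
        nlinarith [sq_nonneg (‖∇ (fun y => u y t) x‖ - M * (invBracket x * |u x t|)),
          mul_nonneg hM (sq_nonneg |u x t|), sq_nonneg (deriv (u x) t)]

theorem le_production_momentum (hd : 3 ≤ Module.finrank ℝ E) (hu : IsWaveSolution V u)
    (hV : IsDefocusing V γ) (x : E) (t : ℝ) :
    (1 - 2 * γ⁻¹) * invBracket x ^ 3 * energyDensity V u x t
      ≤ production (momentum morawetzField (morawetzWeight γ⁻¹) u)
          (momentumFlux V morawetzField (morawetzWeight γ⁻¹) u) x t := by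
  have hq := invBracket_pos x
  have hd' : (0 : ℝ) ≤ Module.finrank ℝ E - 3 := sub_nonneg.2 (mod_cast hd)
  have hγ := hV.two_lt
  have hb := hV.inv_pos
  have hbγ : γ⁻¹ * γ = 1 := inv_mul_cancel₀ (by positivity)
  have hb' := hV.inv_lt_half.le
  have hlaplacian := divergence_gradient_morawetzWeight_nonpos hd hb.le hb' x
  have hfield := le_inner_fderiv_morawetzField x (∇ (fun y => u y t) x)
  have hpotential : (1 - 2 * γ⁻¹) * invBracket x ^ 3 * V (u x t)
      ≤ morawetzWeight γ⁻¹ x * (u x t * deriv V (u x t))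
        - divergence morawetzField x * V (u x t) := by
    have hcube : invBracket x ^ 3 ≤ invBracket x :=
      pow_le_of_le_one hq.le (invBracket_le_one x) three_ne_zero
    calc _ ≤ (Module.finrank ℝ E - 1) / 2 * (γ - 2) * invBracket x * V (u x t) := by
          refine mul_le_mul_of_nonneg_right (mul_le_mul ?_ hcube (by positivity) ?_) (hV.nonneg _)
          · nlinarith
          · nlinarith
      _ = morawetzWeight γ⁻¹ x * (γ * V (u x t)) - divergence morawetzField x * V (u x t) := by
          rw [divergence_morawetzField, morawetzWeight]
          linear_combination -invBracket x ^ 3 * V (u x t) * hbγ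
      _ ≤ _ := by
          gcongr ?_ - _
          exact mul_le_mul_of_nonneg_left (hV.mul_le _) (morawetzWeight_nonneg (by lia) hb.le x)
  rw [production_momentum hu hV.contDiff contDiff_morawetzField contDiff_morawetzWeight,
    energyDensity]
  have hweight : morawetzWeight γ⁻¹ x - divergence morawetzField x / 2
      = (γ⁻¹ - 1 / 2) * invBracket x ^ 3 := by
    rw [divergence_morawetzField, morawetzWeight]
    ring
  rw [hweight]
  linarith [mul_nonneg (sq_nonneg (u x t)) (neg_nonneg.2 hlaplacian),
    mul_nonneg (mul_nonneg hb.le (pow_pos hq 3).le) (sq_nonneg ‖∇ (fun y => u y t) x‖)]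

end MorawetzEstimate

section LocalEnergy

variable [InnerProductSpace ℝ E] [FiniteDimensional ℝ E] [MeasurableSpace E] [BorelSpace E]
  {V : ℝ → ℝ} {u : E → ℝ → ℝ} {γ r E₀ : ℝ}

theorem integrable_invBracket_sq_mul_sq_and_integral_le (hd : 3 ≤ Module.finrank ℝ E) (hr : 2 ≤ r)
    {t : ℝ} (hu : ContDiff ℝ 2 (Function.uncurry u)) (hV0 : ∀ s, 0 ≤ V s)
    (hur : Integrable fun x => |u x t| ^ r) (he : Integrable fun x => energyDensity V u x t) :
    Integrable (fun x => invBracket x ^ 2 * u x t ^ 2) ∧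
      ∫ x, invBracket x ^ 2 * u x t ^ 2 ≤ 8 * ∫ x, energyDensity V u x t := by
  have hle (x : E) : ‖fderiv ℝ (fun y => u y t) x‖ ^ 2 ≤ 2 * energyDensity V u x t := by
    have := hV0 (u x t)
    rw [← norm_gradient, energyDensity]
    linarith [sq_nonneg (deriv (u x) t)]
  have hut : ContDiff ℝ 2 fun x => u x t := contDiff_space_slice hu t
  have hgrad : Integrable fun x => ‖fderiv ℝ (fun y => u y t) x‖ ^ 2 :=
    (he.const_mul 2).mono'
      ((hut.continuous_fderiv two_ne_zero).norm.pow 2).aestronglyMeasurable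
      (ae_of_all _ fun x => by simpa using hle x)
  obtain ⟨hint, hhardy⟩ := hardy_inequality hd hr (hut.of_le one_le_two) hur hgrad
  have hmono := integral_mono hgrad (he.const_mul 2) hle
  rw [integral_const_mul] at hmono
  exact ⟨hint, by linarith⟩

theorem integral_setIntegral_closedBall_mono {f g : E → ℝ → ℝ}
    (hf : Continuous (Function.uncurry f)) (hg : Continuous (Function.uncurry g)) {R : ℝ}
    (hfg : ∀ x t, ‖x‖ ≤ R → f x t ≤ g x t) {S T : ℝ} (hST : S ≤ T) :
    ∫ t in S..T, ∫ x in Metric.closedBall (0 : E) R, f x t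
      ≤ ∫ t in S..T, ∫ x in Metric.closedBall (0 : E) R, g x t := by
  have hint {h : E → ℝ → ℝ} (hh : Continuous (Function.uncurry h)) (t : ℝ) :
      IntegrableOn (fun x => h x t) (Metric.closedBall (0 : E) R) :=
    (hh.comp (.prodMk_left t)).continuousOn.integrableOn_compact (isCompact_closedBall 0 R)
  exact intervalIntegral.integral_mono hST
    ((continuous_setIntegral_closedBall hf R).intervalIntegrable _ _)
    ((continuous_setIntegral_closedBall hg R).intervalIntegrable _ _) fun t =>
      setIntegral_mono_on (hint hf t) (hint hg t) measurableSet_closedBall fun x hx =>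
        hfg x t (mem_closedBall_zero_iff.1 hx)

theorem integral_setIntegral_production_morawetz_le (hd : 3 ≤ Module.finrank ℝ E)
    (hu : IsWaveSolution V u) (hV : IsDefocusing V γ) (hr : 2 ≤ r)
    (hur : ∀ t, Integrable fun x => |u x t| ^ r)
    (he : ∀ t, Integrable fun x => energyDensity V u x t)
    (heE : ∀ t, ∫ x, energyDensity V u x t ≤ E₀) (R : ℝ) {S T : ℝ} (hST : S ≤ T) :
    ∫ t in S..T, ∫ x in Metric.closedBall (0 : E) R,
        production (momentum morawetzField (morawetzWeight γ⁻¹) u)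
          (momentumFlux V morawetzField (morawetzWeight γ⁻¹) u) x t
      ≤ 2 * (4 * E₀ + (Module.finrank ℝ E ^ 2 + Module.finrank ℝ E) * (8 * E₀)) := by
  have hb := hV.inv_pos
  have hb' := hV.inv_lt_half
  have hM : (3 : ℝ) ≤ Module.finrank ℝ E := mod_cast hd
  have hhardy (t : ℝ) :=
    integrable_invBracket_sq_mul_sq_and_integral_le hd hr hu.contDiff hV.nonneg (hur t) (he t)
  have he0 := energyDensity_nonneg (u := u) hV.nonneg
  have hg (x : E) : |morawetzWeight γ⁻¹ x| ≤ Module.finrank ℝ E * invBracket x := by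
    rw [abs_of_nonneg (morawetzWeight_nonneg (by lia) hb.le x)]
    exact morawetzWeight_le hb.le hb'.le x
  have hg' (x : E) : ‖∇ (morawetzWeight γ⁻¹) x‖ ≤ Module.finrank ℝ E * invBracket x ^ 2 := by
    refine (norm_gradient_morawetzWeight_le (by lia) hb.le hb'.le x).trans ?_
    gcongr
    linarith
  refine integral_setIntegral_production_le
    (J := fun x t => 4 * energyDensity V u x t
      + (Module.finrank ℝ E ^ 2 + Module.finrank ℝ E) * (invBracket x ^ 2 * u x t ^ 2))
    (contDiff_momentum contDiff_morawetzField contDiff_morawetzWeight hu.contDiff)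
    (contDiff_momentumFlux hV.contDiff contDiff_morawetzField contDiff_morawetzWeight hu.contDiff)
    (fun x t => ?_) (fun x t => ?_)
    (fun x t => norm_momentumFlux_le (norm_morawetzField_le_one x) (hg x) (hg' x) hV.nonneg t)
    (fun t => ((he t).const_mul 4).add ((hhardy t).1.const_mul _)) (fun t => ?_) R hST
  · refine le_trans ?_ (le_production_momentum hd hu hV x t)
    exact mul_nonneg (mul_nonneg (by linarith) (pow_pos (invBracket_pos x) 3).le) (he0 x t)
  · refine (abs_momentum_le (norm_morawetzField_le_one x) (hg x) hV.nonneg t).trans ?_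
    have := he0 x t
    gcongr ?_ * _ + ?_ * _ <;> linarith
  · rw [integral_add ((he t).const_mul 4) ((hhardy t).1.const_mul _), integral_const_mul,
      integral_const_mul]
    gcongr
    exacts [heE t, (hhardy t).2.trans (by gcongr; exact heE t)]

theorem morawetz_estimate (hd : 3 ≤ Module.finrank ℝ E)
    (hu : IsWaveSolution V u) (hV : IsDefocusing V γ) (hr : 2 ≤ r)
    (hur : ∀ t, Integrable fun x => |u x t| ^ r)
    (he : ∀ t, Integrable fun x => energyDensity V u x t)
    (heE : ∀ t, ∫ x, energyDensity V u x t ≤ E₀) (R : ℝ) {S T : ℝ} (hST : S ≤ T) :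
    (1 - 2 * γ⁻¹) * ∫ t in S..T, ∫ x in Metric.closedBall (0 : E) R,
        invBracket x ^ 3 * energyDensity V u x t
      ≤ 2 * (4 * E₀ + (Module.finrank ℝ E ^ 2 + Module.finrank ℝ E) * (8 * E₀)) := by
  have hcont := continuous_energyDensity hV.contDiff.continuous hu.contDiff
  have hq : Continuous fun z : E × ℝ => invBracket z.1 :=
    (contDiff_invBracket (n := 0)).continuous.comp continuous_fst
  simp_rw [← intervalIntegral.integral_const_mul, ← integral_const_mul]
  refine le_trans (integral_setIntegral_closedBall_mono
    (continuous_const.mul ((hq.pow 3).mul hcont))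
    (continuous_production
      (contDiff_momentum contDiff_morawetzField contDiff_morawetzWeight hu.contDiff)
      (contDiff_momentumFlux hV.contDiff contDiff_morawetzField contDiff_morawetzWeight
        hu.contDiff))
    (fun x t _ => ?_) hST)
    (integral_setIntegral_production_morawetz_le hd hu hV hr hur he heE R hST)
  rw [← mul_assoc]
  exact le_production_momentum hd hu hV x t

theorem integrable_setIntegral_energyDensity (hd : 3 ≤ Module.finrank ℝ E)
    (hu : IsWaveSolution V u) (hV : IsDefocusing V γ) (hr : 2 ≤ r)
    (hur : ∀ t, Integrable fun x => |u x t| ^ r)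
    (he : ∀ t, Integrable fun x => energyDensity V u x t)
    (heE : ∀ t, ∫ x, energyDensity V u x t ≤ E₀) (R : ℝ) :
    Integrable fun t => ∫ x in Metric.closedBall (0 : E) R, energyDensity V u x t := by
  have hcont := continuous_energyDensity hV.contDiff.continuous hu.contDiff
  have hq : Continuous fun z : E × ℝ => invBracket z.1 :=
    (contDiff_invBracket (n := 0)).continuous.comp continuous_fst
  have hcont' := continuous_setIntegral_closedBall hcont R
  have hγ : 0 < 1 - 2 * γ⁻¹ := by linarith [hV.inv_lt_half]
  refine integrable_of_intervalIntegral_norm_bounded (a := fun T : ℝ => -T) (b := fun T : ℝ => T)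
    (l := atTop)
    (2 * (4 * E₀ + (Module.finrank ℝ E ^ 2 + Module.finrank ℝ E) * (8 * E₀))
      / ((1 - 2 * γ⁻¹) * (√(1 + R ^ 2))⁻¹ ^ 3))
    (fun T => hcont'.integrableOn_Icc.mono_set Set.Ioc_subset_Icc_self) tendsto_neg_atTop_atBot
    tendsto_id ?_
  filter_upwards [eventually_ge_atTop 0] with T hT
  have hnorm (t : ℝ) : ‖∫ x in Metric.closedBall (0 : E) R, energyDensity V u x t‖
      = ∫ x in Metric.closedBall (0 : E) R, energyDensity V u x t :=
    norm_of_nonneg (integral_nonneg fun x => energyDensity_nonneg hV.nonneg x t)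
  have hweight : ∫ t in -T..T, ∫ x in Metric.closedBall (0 : E) R,
        (√(1 + R ^ 2))⁻¹ ^ 3 * energyDensity V u x t
      ≤ ∫ t in -T..T, ∫ x in Metric.closedBall (0 : E) R,
        invBracket x ^ 3 * energyDensity V u x t :=
    integral_setIntegral_closedBall_mono (continuous_const.mul hcont) ((hq.pow 3).mul hcont)
      (fun x t hx => mul_le_mul_of_nonneg_right
        (pow_le_pow_left₀ (by positivity) (inv_sqrt_le_invBracket hx) 3)
        (energyDensity_nonneg hV.nonneg x t)) (by linarith)
  simp_rw [integral_const_mul, intervalIntegral.integral_const_mul] at hweight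
  simp_rw [hnorm]
  rw [le_div_iff₀' (by positivity), mul_assoc]
  exact (mul_le_mul_of_nonneg_left hweight hγ.le).trans
    (morawetz_estimate hd hu hV hr hur he heE R (by linarith))

end LocalEnergy

section PowerPotential

variable {p : ℝ}

theorem hasDerivAt_abs_rpow_div (hp : 1 < p) (s : ℝ) :
    HasDerivAt (fun s : ℝ => |s| ^ (p + 1) / (p + 1)) (|s| ^ (p - 1) * s) s := by
  have hp' : p + 1 ≠ 0 := by linarith
  refine ((hasDerivAt_abs_rpow s (by linarith : 1 < p + 1)).div_const (p + 1)).congr_deriv ?_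
  rw [show p + 1 - 2 = p - 1 by ring]
  field_simp

theorem mul_deriv_abs_rpow_div (hp : 1 < p) (s : ℝ) :
    s * deriv (fun s : ℝ => |s| ^ (p + 1) / (p + 1)) s = (p + 1) * (|s| ^ (p + 1) / (p + 1)) := by
  rw [(hasDerivAt_abs_rpow_div hp s).deriv, mul_div_cancel₀ _ (by linarith),
    show p + 1 = p - 1 + 2 by ring, rpow_add_of_nonneg (abs_nonneg s) (by linarith) zero_le_two,
    rpow_two, sq_abs]
  ring

theorem isDefocusing_abs_rpow_div (hp : 1 < p) :
    IsDefocusing (fun s : ℝ => |s| ^ (p + 1) / (p + 1)) (p + 1) where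
  contDiff := (contDiff_norm_rpow (E := ℝ) (by linarith)).div_const _
  nonneg s := by positivity
  two_lt := by linarith
  mul_le s := (mul_deriv_abs_rpow_div hp s).ge

end PowerPotential

section TailIntegral

variable [MeasurableSpace E] {μ : Measure E} {f : E → ℝ}

/-- The integral of `f` outside the closed ball of radius `s` about the origin. -/
noncomputable def tailIntegral (μ : Measure E) (f : E → ℝ) (s : ℝ) : ℝ :=
  ∫ x in {x | s < ‖x‖}, f x ∂μ

theorem tailIntegral_nonneg (hf0 : ∀ x, 0 ≤ f x) (s : ℝ) : 0 ≤ tailIntegral μ f s :=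
  integral_nonneg hf0

theorem antitone_tailIntegral (hf : Integrable f μ) (hf0 : ∀ x, 0 ≤ f x) :
    Antitone (tailIntegral μ f) := fun _ _ hst =>
  setIntegral_mono_set hf.integrableOn (ae_of_all _ hf0)
    (LE.le.eventuallyLE fun _ hx => lt_of_le_of_lt hst hx)

variable [OpensMeasurableSpace E]

theorem tendsto_tailIntegral_atTop (hf : Integrable f μ) :
    Tendsto (tailIntegral μ f) atTop (𝓝 0) := by
  have hempty : ⋂ s : ℝ, {x : E | s < ‖x‖} = ∅ :=
    Set.eq_empty_of_forall_notMem fun x hx =>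
      lt_irrefl ‖x‖ (Set.mem_iInter.1 hx ‖x‖)
  have h := tendsto_setIntegral_of_antitone (μ := μ) (f := f) (s := fun s : ℝ => {x : E | s < ‖x‖})
    (fun s => measurableSet_lt measurable_const measurable_norm)
    (fun _ _ hst _ hx => lt_of_le_of_lt hst hx) ⟨0, hf.integrableOn⟩
  rw [hempty, setIntegral_empty] at h
  exact h

theorem tailIntegral_isLittleO_rpow {κ : ℝ} (hκ : 0 ≤ κ) (hf : Integrable f μ)
    (hf0 : ∀ x, 0 ≤ f x) (hw : Integrable (fun x => (1 + ‖x‖ ^ κ) * f x) μ) :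
    tailIntegral μ f =o[atTop] fun s => s ^ (-κ) := by
  have hsmall := (Asymptotics.isLittleO_one_iff ℝ).2 (tendsto_tailIntegral_atTop hw)
  refine (Asymptotics.IsBigO.of_bound 1 ?_).trans_isLittleO
    ((hsmall.mul_isBigO (Asymptotics.isBigO_refl (fun s : ℝ => s ^ (-κ)) atTop)).congr_right
      fun s => one_mul _)
  filter_upwards [eventually_gt_atTop 0] with s hs
  have hchebyshev : s ^ κ * tailIntegral μ f s
      ≤ tailIntegral μ (fun x => (1 + ‖x‖ ^ κ) * f x) s := by
    rw [tailIntegral, ← integral_const_mul]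
    refine setIntegral_mono_on (hf.const_mul _).integrableOn hw.integrableOn
      (measurableSet_lt measurable_const measurable_norm) fun x hx => ?_
    have : s ^ κ ≤ ‖x‖ ^ κ := rpow_le_rpow hs.le (le_of_lt hx) hκ
    exact mul_le_mul_of_nonneg_right (by linarith) (hf0 x)
  rw [one_mul, norm_of_nonneg (tailIntegral_nonneg hf0 s), rpow_neg hs.le, ← div_eq_mul_inv]
  exact ((le_div_iff₀' (rpow_pos_of_pos hs κ)).2 hchebyshev).trans (le_abs_self _)

end TailIntegral

theorem isLittleO_intervalIntegral_rpow {F : Type*} [NormedAddCommGroup F] [NormedSpace ℝ F]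
    {κ : ℝ} (hκ : κ < 1) {G : ℝ → F} (hG : ∀ a b, IntervalIntegrable G volume a b)
    (hGκ : G =o[atTop] fun s => s ^ (-κ)) :
    (fun t => ∫ s in (0 : ℝ)..t, G s) =o[atTop] fun t => t ^ (1 - κ) := by
  have hκ' : 0 < 1 - κ := sub_pos.2 hκ
  refine Asymptotics.isLittleO_iff.2 fun ε hε => ?_
  obtain ⟨S, hS⟩ := eventually_atTop.1
    ((hGκ.def (show 0 < (1 - κ) * (ε / 2) by positivity)).and (eventually_gt_atTop 0))
  have hS0 : 0 < S := (hS S le_rfl).2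
  have hnear := ((tendsto_rpow_atTop hκ').eventually_ge_atTop
    (‖∫ s in (0 : ℝ)..S, G s‖ / (ε / 2)))
  filter_upwards [hnear, eventually_ge_atTop S] with t ht hSt
  have hfar : ‖∫ s in S..t, G s‖ ≤ ε / 2 * t ^ (1 - κ) :=
    calc ‖∫ s in S..t, G s‖ ≤ ∫ s in S..t, (1 - κ) * (ε / 2) * s ^ (-κ) := by
          refine intervalIntegral.norm_integral_le_of_norm_le hSt (ae_of_all _ fun s hs => ?_)
            ((intervalIntegral.intervalIntegrable_rpow' (by linarith)).const_mul _)
          simpa [norm_of_nonneg (rpow_nonneg (hS0.trans hs.1).le _)] using (hS s hs.1.le).1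
      _ = ε / 2 * (t ^ (1 - κ) - S ^ (1 - κ)) := by
          rw [intervalIntegral.integral_const_mul, integral_rpow (Or.inl (by linarith)),
            neg_add_eq_sub]
          field_simp
      _ ≤ ε / 2 * t ^ (1 - κ) := by
          gcongr
          exact sub_le_self _ (rpow_nonneg hS0.le _)
  rw [div_le_iff₀' (half_pos hε)] at ht
  rw [norm_of_nonneg (rpow_nonneg (hS0.le.trans hSt) _),
    ← intervalIntegral.integral_add_adjacent_intervals (hG 0 S) (hG S t)]
  linarith [norm_add_le (∫ s in (0 : ℝ)..S, G s) (∫ s in S..t, G s)]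

section IntegralCompAbs

variable {F : Type*} [NormedAddCommGroup F] {g : ℝ → F} {t : ℝ}

theorem intervalIntegrable_comp_abs (ht : 0 ≤ t) (hg : IntervalIntegrable g volume 0 t) :
    IntervalIntegrable (fun s => g |s|) volume (-t) t := by
  have hright : IntervalIntegrable (fun s => g |s|) volume 0 t :=
    hg.congr fun s hs => by
      rw [Set.uIoc_of_le ht] at hs
      simp only [abs_of_pos hs.1]
  have hleft : IntervalIntegrable (fun s => g |s|) volume 0 (-t) := by
    simpa using (IntervalIntegrable.iff_comp_neg (by simp)).1 hright
  exact hleft.symm.trans hright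

theorem intervalIntegral_comp_abs [NormedSpace ℝ F] (ht : 0 ≤ t)
    (hg : IntervalIntegrable g volume 0 t) :
    ∫ s in -t..t, g |s| = (2 : ℝ) • ∫ s in (0 : ℝ)..t, g s := by
  have hint := intervalIntegrable_comp_abs ht hg
  have hright : ∫ s in (0 : ℝ)..t, g |s| = ∫ s in (0 : ℝ)..t, g s :=
    intervalIntegral.integral_congr fun s hs => by
      rw [Set.uIcc_of_le ht] at hs
      simp only [abs_of_nonneg hs.1]
  have hleft : ∫ s in -t..0, g |s| = ∫ s in (0 : ℝ)..t, g |s| := by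
    simpa using (intervalIntegral.integral_comp_neg (a := 0) (b := t) fun s => g |s|).symm
  have hzero : (0 : ℝ) ∈ Set.uIcc (-t) t := by simp [ht]
  rw [← intervalIntegral.integral_add_adjacent_intervals
    (hint.mono_set (Set.uIcc_subset_uIcc_left hzero))
    (hint.mono_set (Set.uIcc_subset_uIcc_right hzero)), hleft, hright, two_smul]

end IntegralCompAbs

section InteriorDecay

variable [MeasurableSpace E] {μ : Measure E} {e : E → ℝ → ℝ} {t h : ℝ}

/-- Over the time interval `(t, t + h]` the ball of radius `t` contains the light cone with base
the ball of radius `t - h`. -/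
theorem mul_setIntegral_ball_le (he0 : ∀ x t, 0 ≤ e x t) (hint : ∀ t, Integrable (e · t) μ)
    (hball : Integrable fun τ => ∫ x in Metric.ball 0 t, e x τ ∂μ)
    (hforward : ∀ η t t' : ℝ, η ≤ t → t ≤ t' →
      ∫ x in Metric.ball 0 (t - η), e x t ∂μ ≤ ∫ x in Metric.ball 0 (t' - η), e x t' ∂μ)
    (hh : 0 ≤ h) (hht : h ≤ t) :
    h * ∫ x in Metric.ball 0 (t - h), e x t ∂μ
      ≤ ∫ τ in {τ | t < |τ|}, ∫ x in Metric.ball 0 t, e x τ ∂μ :=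
  calc h * ∫ x in Metric.ball 0 (t - h), e x t ∂μ
      = ∫ _ in Set.Ioc t (t + h), ∫ x in Metric.ball 0 (t - h), e x t ∂μ := by simp [hh]
    _ ≤ ∫ τ in Set.Ioc t (t + h), ∫ x in Metric.ball 0 t, e x τ ∂μ := by
        refine setIntegral_mono_on (by simp) hball.integrableOn measurableSet_Ioc fun τ hτ => ?_
        exact (hforward h t τ hht hτ.1.le).trans (setIntegral_mono_set (hint τ).integrableOn
          (ae_of_all _ (he0 · τ)) (Metric.ball_subset_ball (by linarith [hτ.2])).eventuallyLE)
    _ ≤ ∫ τ in {τ | t < |τ|}, ∫ x in Metric.ball 0 t, e x τ ∂μ :=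
        setIntegral_mono_set hball.integrableOn
          (ae_of_all _ fun τ => integral_nonneg (he0 · τ))
          (LE.le.eventuallyLE fun τ hτ => hτ.1.trans_le (le_abs_self τ))

variable [NormedSpace ℝ E] [FiniteDimensional ℝ E] [Nontrivial E] [BorelSpace E]
  [μ.IsAddHaarMeasure]

theorem closedBall_ae_eq_ball (x : E) (R : ℝ) :
    Metric.closedBall x R =ᵐ[μ] Metric.ball x R := by
  have h := Measure.addHaar_sphere μ x R
  rw [← Metric.closedBall_sdiff_ball] at h
  exact ae_eq_set.2 ⟨h, by simp [Set.sdiff_eq_empty.2 Metric.ball_subset_closedBall]⟩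

theorem setIntegral_compl_ball (f : E → ℝ) (R : ℝ) :
    ∫ x in (Metric.ball 0 R)ᶜ, f x ∂μ = tailIntegral μ f R := by
  rw [tailIntegral, ← setIntegral_congr_set (closedBall_ae_eq_ball 0 R).compl]
  congr with x
  simp

theorem integral_setIntegral_compl_ball_le (he0 : ∀ x t, 0 ≤ e x t)
    (hint : Integrable (e · 0) μ)
    (hbackward : ∀ t s, tailIntegral μ (e · t) s ≤ tailIntegral μ (e · 0) (s - |t|))
    (ht : 0 ≤ t) :
    ∫ τ in Set.Ioc (-t) t, ∫ x in (Metric.ball 0 t)ᶜ, e x τ ∂μ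
      ≤ 2 * ∫ s in (0 : ℝ)..t, tailIntegral μ (e · 0) s := by
  have htail : IntervalIntegrable (fun s => tailIntegral μ (e · 0) (t - s)) volume 0 t :=
    Monotone.intervalIntegrable fun _ _ hab =>
      antitone_tailIntegral hint (he0 · 0) (sub_le_sub_left hab t)
  calc ∫ τ in Set.Ioc (-t) t, ∫ x in (Metric.ball 0 t)ᶜ, e x τ ∂μ
      ≤ ∫ τ in Set.Ioc (-t) t, tailIntegral μ (e · 0) (t - |τ|) := by
        simp_rw [setIntegral_compl_ball]
        exact integral_mono_of_nonneg (ae_of_all _ fun τ => tailIntegral_nonneg (he0 · τ) t)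
          (intervalIntegrable_comp_abs ht htail).1 (ae_of_all _ fun τ => hbackward τ t)
    _ = 2 * ∫ s in (0 : ℝ)..t, tailIntegral μ (e · 0) s := by
        rw [← intervalIntegral.integral_of_le (by linarith), intervalIntegral_comp_abs ht htail,
          smul_eq_mul, intervalIntegral.integral_comp_sub_left (tailIntegral μ (e · 0)) t,
          sub_self, sub_zero]

theorem tendsto_setIntegral_ball_of_morawetz {c κ : ℝ} (hc : 0 < c) (hκ : 0 < κ) (hκ' : κ < 1)
    (he0 : ∀ x t, 0 ≤ e x t) (hint : ∀ t, Integrable (e · t) μ)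
    (hlocal : ∀ R, Integrable fun t => ∫ x in Metric.closedBall 0 R, e x t ∂μ)
    (hforward : ∀ η t t' : ℝ, η ≤ t → t ≤ t' →
      ∫ x in Metric.ball 0 (t - η), e x t ∂μ ≤ ∫ x in Metric.ball 0 (t' - η), e x t' ∂μ)
    (hbackward : ∀ t s, tailIntegral μ (e · t) s ≤ tailIntegral μ (e · 0) (s - |t|))
    (hmorawetz : ∀ R : ℝ, 0 < R →
      ∫ t in {t : ℝ | R < |t|}, ∫ x in Metric.ball 0 R, e x t ∂μ
        ≤ ∫ t in Set.Ioc (-R) R, ∫ x in (Metric.ball 0 R)ᶜ, e x t ∂μ)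
    (hweight : Integrable (fun x => (1 + ‖x‖ ^ κ) * e x 0) μ) :
    Tendsto (fun t : ℝ => ∫ x in Metric.ball 0 (t - c * t ^ (1 - κ)), e x t ∂μ) atTop (𝓝 0) := by
  have hball (R : ℝ) : Integrable fun t => ∫ x in Metric.ball 0 R, e x t ∂μ := by
    simpa only [setIntegral_congr_set (closedBall_ae_eq_ball (0 : E) R)] using hlocal R
  have htail := (isLittleO_intervalIntegral_rpow hκ'
    (fun a b => (antitone_tailIntegral (hint 0) (he0 · 0)).intervalIntegrable)
    (tailIntegral_isLittleO_rpow hκ.le (hint 0) (he0 · 0) hweight)).tendsto_div_nhds_zero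
  have hshrink : Tendsto (fun t : ℝ => c * t ^ (-κ)) atTop (𝓝 0) := by
    simpa using (tendsto_rpow_neg_atTop hκ).const_mul c
  refine squeeze_zero' (Eventually.of_forall fun t => integral_nonneg (he0 · t)) ?_
    (by simpa using htail.const_mul (2 / c))
  filter_upwards [eventually_gt_atTop 0, hshrink.eventually_le_const one_pos] with t ht hct
  have hle : c * t ^ (1 - κ) ≤ t := by
    rw [sub_eq_add_neg, rpow_add ht, rpow_one, mul_left_comm]
    exact mul_le_of_le_one_right ht.le hct
  rw [div_mul_div_comm, le_div_iff₀' (mul_pos hc (rpow_pos_of_pos ht _))]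
  calc _ ≤ ∫ τ in {τ | t < |τ|}, ∫ x in Metric.ball 0 t, e x τ ∂μ :=
        mul_setIntegral_ball_le he0 hint (hball t) hforward (by positivity) hle
    _ ≤ ∫ τ in Set.Ioc (-t) t, ∫ x in (Metric.ball 0 t)ᶜ, e x τ ∂μ := hmorawetz t ht
    _ ≤ _ := integral_setIntegral_compl_ball_le he0 (hint 0) hbackward ht.le

end InteriorDecay

theorem isWaveSolution_abs_rpow_div {d : ℕ} {p : ℝ} (hp : 1 < p)
    {u : EuclideanSpace ℝ (Fin d) → ℝ → ℝ} (hu : ContDiff ℝ 2 (Function.uncurry u))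
    (hwave : ∀ x t, deriv (deriv (u x)) t
        - ∑ i : Fin d, fderiv ℝ (fun y => fderiv ℝ (fun z => u z t) y
            (EuclideanSpace.single i 1)) x (EuclideanSpace.single i 1)
      = -(|u x t| ^ (p - 1) * u x t)) :
    IsWaveSolution (fun s => |s| ^ (p + 1) / (p + 1)) u where
  contDiff := hu
  wave_eq x t := by
    rw [divergence_gradient_eq_sum (EuclideanSpace.basisFun (Fin d) ℝ) (contDiff_space_slice hu t),
      (hasDerivAt_abs_rpow_div hp _).deriv, ← hwave x t]
    simp only [EuclideanSpace.basisFun_apply]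

theorem integrable_abs_rpow_of_energyDensity [InnerProductSpace ℝ E] [FiniteDimensional ℝ E]
    [MeasurableSpace E] [BorelSpace E] {V : ℝ → ℝ} {u : E → ℝ → ℝ} {r C t : ℝ}
    (hr : 0 ≤ r) (hC : 0 ≤ C) (hVr : ∀ s, |s| ^ r ≤ C * V s)
    (hu : ContDiff ℝ 2 (Function.uncurry u)) (he : Integrable fun x => energyDensity V u x t) :
    Integrable fun x => |u x t| ^ r := by
  refine (he.const_mul C).mono' ((contDiff_space_slice hu t).continuous.abs.rpow_const
    fun _ => Or.inr hr).aestronglyMeasurable (ae_of_all _ fun x => ?_)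
  rw [norm_of_nonneg (by positivity)]
  refine (hVr _).trans (mul_le_mul_of_nonneg_left ?_ hC)
  rw [energyDensity]
  linarith [sq_nonneg (deriv (u x) t), sq_nonneg ‖∇ (fun y => u y t) x‖]

end WaveDecay

open WaveDecay in
theorem center_energy_decay_general {E : Type*} [NormedAddCommGroup E] [InnerProductSpace ℝ E]
    [FiniteDimensional ℝ E] [MeasurableSpace E] [BorelSpace E] (hd : 3 ≤ Module.finrank ℝ E)
    {V : ℝ → ℝ} {γ r C : ℝ} (hV : IsDefocusing V γ) (hr : 2 ≤ r)
    (hVr : ∀ s, |s| ^ r ≤ C * V s) {u : E → ℝ → ℝ} (hu : IsWaveSolution V u)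
    (hint : ∀ t, Integrable (energyDensity V u · t)) {E₀ : ℝ}
    (henergy : ∀ t, ∫ x, energyDensity V u x t ≤ E₀)
    (hforward : ∀ η t t' : ℝ, η ≤ t → t ≤ t' →
      ∫ x in Metric.ball 0 (t - η), energyDensity V u x t
        ≤ ∫ x in Metric.ball 0 (t' - η), energyDensity V u x t')
    (hbackward : ∀ t s, tailIntegral volume (energyDensity V u · t) s
      ≤ tailIntegral volume (energyDensity V u · 0) (s - |t|))
    (hmorawetz : ∀ R : ℝ, 0 < R →
      ∫ t in {t : ℝ | R < |t|}, ∫ x in Metric.ball 0 R, energyDensity V u x t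
        ≤ ∫ t in Set.Ioc (-R) R, ∫ x in (Metric.ball 0 R)ᶜ, energyDensity V u x t)
    {κ : ℝ} (hκ : 0 < κ) (hκ' : κ < 1)
    (hweight : Integrable fun x => (1 + ‖x‖ ^ κ) * energyDensity V u x 0) {c : ℝ} (hc : 0 < c) :
    Tendsto (fun t : ℝ => ∫ x in Metric.ball 0 (t - c * t ^ (1 - κ)), energyDensity V u x t)
      atTop (nhds 0) := by
  have : Nontrivial E := Module.nontrivial_of_finrank_pos (R := ℝ) (by lia)
  have hC : 0 ≤ C :=
    (pos_of_mul_pos_left (zero_lt_one.trans_le (by simpa using hVr 1)) (hV.nonneg 1)).le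
  have hur (t : ℝ) : Integrable fun x => |u x t| ^ r :=
    integrable_abs_rpow_of_energyDensity (by linarith) hC hVr hu.contDiff (hint t)
  exact tendsto_setIntegral_ball_of_morawetz hc hκ hκ' (energyDensity_nonneg hV.nonneg) hint
    (integrable_setIntegral_energyDensity hd hu hV hr hur hint henergy) hforward hbackward
    hmorawetz hweight

/-- Interior energy decay: under finite speed of energy propagation, the Morawetz
energy-distribution inequality, and `κ`-weighted energy decay of the data, the energy
in the region `{|x| < t - c t^{1-κ}}` tends to `0` as `t → +∞`. -/
theorem center_energy_decay (d : ℕ) (hd : 3 ≤ d) (p κ E : ℝ)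
    (hp : 1 < p) (hκ : 0 < κ) (hκ' : κ < 1) (hE : 0 < E)
    (u : EuclideanSpace ℝ (Fin d) → ℝ → ℝ)
    (hu : ContDiff ℝ 2 (Function.uncurry u))
    (hwave : ∀ (x : EuclideanSpace ℝ (Fin d)) (t : ℝ),
      deriv (fun s => deriv (fun s' => u x s') s) t
        - ∑ i : Fin d, fderiv ℝ (fun y => fderiv ℝ (fun z => u z t) y
            (EuclideanSpace.single i 1)) x (EuclideanSpace.single i 1)
      = -(|u x t| ^ (p - 1) * u x t))
    (e : EuclideanSpace ℝ (Fin d) → ℝ → ℝ)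
    (he : e = fun x t => ‖gradient (fun y => u y t) x‖ ^ 2 / 2
      + (deriv (u x) t) ^ 2 / 2 + |u x t| ^ (p + 1) / (p + 1))
    (hint : ∀ t : ℝ, Integrable (fun x => e x t))
    (henergy : ∀ t : ℝ, (∫ x : EuclideanSpace ℝ (Fin d), e x t) = E)
    -- (i) finite speed of energy propagation:
    (hforward : ∀ η t t' : ℝ, η ≤ t → t ≤ t' →
      (∫ x in Metric.ball (0 : EuclideanSpace ℝ (Fin d)) (t - η), e x t)
        ≤ ∫ x in Metric.ball (0 : EuclideanSpace ℝ (Fin d)) (t' - η), e x t')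
    (hbackward : ∀ t' s : ℝ,
      (∫ x in {x : EuclideanSpace ℝ (Fin d) | s < ‖x‖}, e x t')
        ≤ ∫ x in {x : EuclideanSpace ℝ (Fin d) | s - |t'| < ‖x‖}, e x 0)
    -- (ii) Morawetz consequence:
    (hmorawetz : ∀ R : ℝ, 0 < R →
      (∫ t' in {t : ℝ | R < |t|},
          ∫ x in Metric.ball (0 : EuclideanSpace ℝ (Fin d)) R, e x t')
        ≤ ∫ t' in Set.Ioc (-R) R,
            ∫ x in (Metric.ball (0 : EuclideanSpace ℝ (Fin d)) R)ᶜ, e x t')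
    -- (iii) weighted energy of the data:
    (hweight : Integrable (fun x : EuclideanSpace ℝ (Fin d) => (1 + ‖x‖ ^ κ) * e x 0)) :
    ∀ c : ℝ, 0 < c →
      Tendsto (fun t : ℝ =>
          ∫ x in Metric.ball (0 : EuclideanSpace ℝ (Fin d)) (t - c * t ^ (1 - κ)), e x t)
        atTop (nhds 0) := by
  subst he
  intro c hc
  have hcoercive (s : ℝ) : |s| ^ (p + 1) ≤ (p + 1) * (|s| ^ (p + 1) / (p + 1)) :=
    (mul_div_cancel₀ _ (by linarith)).ge
  exact center_energy_decay_general (by simpa using hd) (WaveDecay.isDefocusing_abs_rpow_div hp)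
    (by linarith) hcoercive (WaveDecay.isWaveSolution_abs_rpow_div hp hu hwave)
    hint (fun t => (henergy t).le) hforward hbackward hmorawetz hκ hκ' hweight hc
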